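/- Let d = 1 and assume alternative (i) holds. Let μ be a Borel probability measure on [−d_max, d_max] with μ((−d_max, d_max)) > 0. For L ∈ ℕ, L ≥ 1, and ω ∈ [−d_max,d_max]^L define the Neumann ground-state energy λ_L^N(ω) := inf over nonzero smooth ψ on a neighborhood of [1/2, L+1/2] of (∫_{1/2}^{L+1/2} (ψ'(x)² + Σ_{i=1}^L q(x−i−ω_i) ψ(x)²) dx)/(∫_{1/2}^{L+1/2} ψ(x)² dx). Then there exist constants C₁ > 0, s₀ > 0 and γ₀ > 0 such that for every L ≥ 1, μ^{⊗L}( { ω ∈ [−d_max,d_max]^L : λ_L^N(ω) ≤ E₀ + s₀ e^{−2C₁(L+1)} } ) ≤ e^{−γ₀ L}. -/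

import Mathlib

/-!
Write `e = E₀(dmax)` for the Neumann energy of a cell with extremal displacement. Alternative (i)
says that `e` is the minimum of `E₀(·)`, attained only at `± dmax`. Three facts give the theorem.

*`E₀ ≤ e`* (`GroundEnergy1_le_E0fun1`). For the alternating configuration `± dmax` the potential is
invariant under reflection at every cell wall. A function on one cell that is flat near the walls
extends smoothly by reflections; cutting the extension off outside `2 N` cells costs an amount
independent of `N`, so the energy of this configuration is at most `e`. Flat functions suffice by
approximation (`formNonneg_of_flat`).

*Deterministic lower bound* (`exists_lamN_lower`). Suppose all cells have energy at least `e` and one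
has energy at least `e + δ`. Let `ρ` be the form of `-d²/dx² + VL - e` at a test function `ψ`. Then
`ψ²` is `O(ρ)` on the excited cell. Since the form is nonnegative on all unions of cells, `ψ` can
grow at most exponentially away from that cell (`FormNonneg.abs_le_exp`): comparison with
`t e^{a(x - A)}`, where `a²` dominates the potential, would otherwise produce a test function with
negative form. Thus `∫ ψ²` is at most a constant times `ρ e^{2 C₁ L}`, that is,
`λ_L ≥ e + s₀ e^{-2 C₁ L}`.

*Probability.* Since `μ` charges the open interval, some superlevel set
`S = {a | e + δ ≤ E₀(a)}` has positive mass; it is closed (`isClosed_superlevel`). By the first two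
facts the event of low energy forces every `ω_i` to avoid `S`, which has probability
`(1 - μ S)^L ≤ e^{-μ(S) L}`.
-/

open MeasureTheory Set

noncomputable section

/-- The potential of a 1-d displacement configuration `ω : ℤ → ℝ`:
`V_ω(x) = ∑_{i ∈ ℤ} q(x - i - ω_i)`. -/
def Vpot1 (q : ℝ → ℝ) (ω : ℤ → ℝ) (x : ℝ) : ℝ := ∑' i : ℤ, q (x - i - ω i)

/-- Variational ground-state energy `E(ω)` of `H_ω = -d²/dx² + V_ω`. -/
def Energy1 (q : ℝ → ℝ) (ω : ℤ → ℝ) : ℝ :=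
  sInf {e | ∃ ψ : ℝ → ℝ, ContDiff ℝ (⊤ : ℕ∞) ψ ∧ HasCompactSupport ψ ∧ ψ ≠ 0 ∧
    e = (∫ x, (deriv ψ x ^ 2 + Vpot1 q ω x * ψ x ^ 2)) / ∫ x, ψ x ^ 2}

/-- `E₀ := inf` over all displacement configurations `ω : ℤ → [-dmax, dmax]`. -/
def GroundEnergy1 (q : ℝ → ℝ) (dmax : ℝ) : ℝ :=
  sInf {e | ∃ ω : ℤ → ℝ, (∀ i, |ω i| ≤ dmax) ∧ e = Energy1 q ω}

/-- Neumann (free) ground-state energy of `-d²/dx² + V` on `(a, b)`: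
infimum of Rayleigh quotients over functions smooth on a neighborhood of
`[a, b]` which do not vanish identically. -/
def NeumannGS1 (V : ℝ → ℝ) (a b : ℝ) : ℝ :=
  sInf {e | ∃ ψ : ℝ → ℝ,
    (∃ U, IsOpen U ∧ Set.Icc a b ⊆ U ∧ ContDiffOn ℝ (⊤ : ℕ∞) ψ U) ∧
    (∃ x ∈ Set.Ioo a b, ψ x ≠ 0) ∧
    e = (∫ x in Set.Ioo a b, (deriv ψ x ^ 2 + V x * ψ x ^ 2)) /
        ∫ x in Set.Ioo a b, ψ x ^ 2}

/-- `E₀(a)`: lowest Neumann eigenvalue of `-d²/dx² + q(· - a)` on `(-1/2, 1/2)`. -/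
def E0fun1 (q : ℝ → ℝ) (a : ℝ) : ℝ :=
  NeumannGS1 (fun x => q (x - a)) (-(1 / 2)) (1 / 2)

/-- Alternative (i) in dimension one: `E₀(·)` is strictly maximized at `0`,
takes the same value at `± dmax`, and is strictly smaller at `± dmax` than at
any interior point. -/
def AltI1 (q : ℝ → ℝ) (dmax : ℝ) : Prop :=
  (∀ a : ℝ, |a| ≤ dmax → a ≠ 0 → E0fun1 q a < E0fun1 q 0) ∧
  (E0fun1 q dmax = E0fun1 q (-dmax)) ∧
  (∀ a : ℝ, |a| < dmax → E0fun1 q dmax < E0fun1 q a)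

/-- Finite-volume potential for `ω ∈ [-dmax, dmax]^L`:
`∑_{i=1}^L q(x - i - ω_i)`. -/
def VL (q : ℝ → ℝ) (L : ℕ) (ω : Fin L → ℝ) (x : ℝ) : ℝ :=
  ∑ i : Fin L, q (x - ((i : ℕ) + 1 : ℝ) - ω i)

/-- `λ_L^N(ω)`: Neumann ground-state energy on `(1/2, L + 1/2)`. -/
def lamN (q : ℝ → ℝ) (L : ℕ) (ω : Fin L → ℝ) : ℝ :=
  NeumannGS1 (VL q L ω) (1 / 2) ((L : ℝ) + 1 / 2)

/-! ### The energy form and the Neumann energy -/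

section
open Filter Topology
open scoped ContDiff Manifold

/-- The energy form `∫_A^B (ψ'² + W ψ²)` of `-d²/dx² + W` on `[A, B]`, without boundary conditions. -/
def qform (W : ℝ → ℝ) (A B : ℝ) (ψ : ℝ → ℝ) : ℝ :=
  ∫ x in A..B, (deriv ψ x ^ 2 + W x * ψ x ^ 2)

/-- The Neumann operator `-d²/dx² + W` on `[A, B]` is nonnegative, tested on functions that are
smooth on the whole line. -/
def FormNonneg (W : ℝ → ℝ) (A B : ℝ) : Prop :=
  ∀ ψ : ℝ → ℝ, ContDiff ℝ ∞ ψ → 0 ≤ qform W A B ψ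

theorem exists_global_extension {ψ : ℝ → ℝ} {U : Set ℝ} {a b : ℝ} (hU : IsOpen U)
    (hab : Icc a b ⊆ U) (hψ : ContDiffOn ℝ ∞ ψ U) :
    ∃ φ : ℝ → ℝ, ContDiff ℝ ∞ φ ∧ ∀ x ∈ Icc a b, φ x = ψ x ∧ deriv φ x = deriv ψ x := by
  obtain ⟨f, h0, h1, -⟩ := exists_contMDiffMap_zero_one_nhds_of_isClosed 𝓘(ℝ) (n := ⊤)
    (s := Uᶜ) (t := Icc a b) hU.isClosed_compl isClosed_Icc
    (by rw [← subset_compl_iff_disjoint_left, compl_compl]; exact hab)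
  have hf : ContDiff ℝ ∞ f := f.contMDiff.contDiff
  rw [eventually_nhdsSet_iff_forall] at h0 h1
  refine ⟨fun x => f x * ψ x, ?_, ?_⟩
  · rw [contDiff_iff_contDiffAt]
    intro x
    by_cases hx : x ∈ U
    · exact hf.contDiffAt.mul (hψ.contDiffAt (hU.mem_nhds hx))
    · refine (contDiffAt_const (c := (0 : ℝ))).congr_of_eventuallyEq ?_
      filter_upwards [h0 x hx] with y hy
      simp [hy]
  · intro x hx
    have h : (fun x => f x * ψ x) =ᶠ[𝓝 x] ψ := by
      filter_upwards [h1 x hx] with y hy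
      simp [hy]
    exact ⟨h.eq_of_nhds, h.deriv_eq⟩

section
variable {W : ℝ → ℝ} {K : ℝ}

theorem intervalIntegrable_pot (hWm : Measurable W) (hWb : ∀ x, |W x| ≤ K) (A B : ℝ) :
    IntervalIntegrable W volume A B := by
  have h : ∀ A B : ℝ, IntegrableOn W (Ioc A B) volume := fun A B =>
    Measure.integrableOn_of_bounded (M := K) measure_Ioc_lt_top.ne hWm.aestronglyMeasurable
      (Eventually.of_forall fun x => by simpa using hWb x)
  exact ⟨h _ _, h _ _⟩

theorem intervalIntegrable_pot_mul (hWm : Measurable W) (hWb : ∀ x, |W x| ≤ K) (A B : ℝ)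
    {f : ℝ → ℝ} (hf : Continuous f) :
    IntervalIntegrable (fun x => W x * f x) volume A B :=
  (intervalIntegrable_pot hWm hWb A B).mul_continuousOn hf.continuousOn

theorem intervalIntegrable_form (hWm : Measurable W) (hWb : ∀ x, |W x| ≤ K) (A B : ℝ)
    {ψ : ℝ → ℝ} (hψ : ContDiff ℝ ∞ ψ) :
    IntervalIntegrable (fun x => deriv ψ x ^ 2 + W x * ψ x ^ 2) volume A B := by
  have h1 : Continuous (deriv ψ) := hψ.continuous_deriv (by simp)
  exact ((h1.pow 2).intervalIntegrable _ _).add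
    (intervalIntegrable_pot_mul hWm hWb A B (hψ.continuous.pow 2))

theorem qform_add (hWm : Measurable W) (hWb : ∀ x, |W x| ≤ K) (A B C : ℝ)
    {ψ : ℝ → ℝ} (hψ : ContDiff ℝ ∞ ψ) :
    qform W A B ψ + qform W B C ψ = qform W A C ψ :=
  intervalIntegral.integral_add_adjacent_intervals
    (intervalIntegrable_form hWm hWb A B hψ) (intervalIntegrable_form hWm hWb B C hψ)

theorem qform_eq (hWm : Measurable W) (hWb : ∀ x, |W x| ≤ K) (A B : ℝ)
    {ψ : ℝ → ℝ} (hψ : ContDiff ℝ ∞ ψ) :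
    qform W A B ψ = (∫ x in A..B, deriv ψ x ^ 2) + ∫ x in A..B, W x * ψ x ^ 2 :=
  intervalIntegral.integral_add
    (((hψ.continuous_deriv (by simp)).pow 2).intervalIntegrable _ _)
    (intervalIntegrable_pot_mul hWm hWb A B (hψ.continuous.pow 2))

theorem abs_integral_pot_le (hWm : Measurable W) (hWb : ∀ x, |W x| ≤ K) {A B : ℝ} (hAB : A ≤ B)
    {ψ : ℝ → ℝ} (hψ : Continuous ψ) :
    |∫ x in A..B, W x * ψ x ^ 2| ≤ K * ∫ x in A..B, ψ x ^ 2 := by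
  rw [← intervalIntegral.integral_const_mul]
  refine (intervalIntegral.abs_integral_le_integral_abs hAB).trans ?_
  refine intervalIntegral.integral_mono_on hAB
    (intervalIntegrable_pot_mul hWm hWb A B (hψ.pow 2)).abs
    ((continuous_const.mul (hψ.pow 2)).intervalIntegrable _ _) ?_
  intro x _
  rw [abs_mul, abs_of_nonneg (sq_nonneg (ψ x))]
  exact mul_le_mul_of_nonneg_right (hWb x) (sq_nonneg _)

theorem qform_sub_const (hWm : Measurable W) (hWb : ∀ x, |W x| ≤ K) (A B c : ℝ)
    {ψ : ℝ → ℝ} (hψ : ContDiff ℝ ∞ ψ) :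
    qform (fun x => W x - c) A B ψ = qform W A B ψ - c * ∫ x in A..B, ψ x ^ 2 := by
  rw [← intervalIntegral.integral_const_mul]
  unfold qform
  have hc : IntervalIntegrable (fun x => c * ψ x ^ 2) volume A B :=
    (continuous_const.mul (hψ.continuous.pow 2)).intervalIntegrable _ _
  rw [← intervalIntegral.integral_sub (intervalIntegrable_form hWm hWb A B hψ) hc]
  refine intervalIntegral.integral_congr fun x _ => ?_
  ring

/-- Variational characterisation of lower bounds for the Neumann energy, with test functions
smooth on the whole line. -/
theorem le_NeumannGS1_iff (hWm : Measurable W) (hWb : ∀ x, |W x| ≤ K) {a b : ℝ} (hab : a < b)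
    (c : ℝ) :
    c ≤ NeumannGS1 W a b ↔ FormNonneg (fun x => W x - c) a b := by
  have hIoo : ∀ f : ℝ → ℝ, ∫ x in Ioo a b, f x = ∫ x in a..b, f x := fun f => by
    rw [intervalIntegral.integral_of_le hab.le, integral_Ioc_eq_integral_Ioo]
  have hpos : ∀ φ : ℝ → ℝ, ContDiff ℝ ∞ φ → (∃ x ∈ Ioo a b, φ x ≠ 0) →
      0 < ∫ x in a..b, φ x ^ 2 := by
    rintro φ hφ ⟨x, hx, hne⟩
    exact intervalIntegral.integral_pos hab (hφ.continuous.pow 2).continuousOn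
      (fun _ _ => sq_nonneg _) ⟨x, Ioo_subset_Icc_self hx, by positivity⟩
  have hset : {e | ∃ ψ : ℝ → ℝ,
      (∃ U, IsOpen U ∧ Set.Icc a b ⊆ U ∧ ContDiffOn ℝ (⊤ : ℕ∞) ψ U) ∧
      (∃ x ∈ Set.Ioo a b, ψ x ≠ 0) ∧
      e = (∫ x in Set.Ioo a b, (deriv ψ x ^ 2 + W x * ψ x ^ 2)) /
        ∫ x in Set.Ioo a b, ψ x ^ 2} =
      {e | ∃ φ : ℝ → ℝ, ContDiff ℝ ∞ φ ∧ (∃ x ∈ Set.Ioo a b, φ x ≠ 0) ∧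
        e = qform W a b φ / ∫ x in a..b, φ x ^ 2} := by
    ext e
    constructor
    · rintro ⟨ψ, ⟨U, hU, hsub, hψ⟩, ⟨x, hx, hne⟩, rfl⟩
      obtain ⟨φ, hφ, heq⟩ := exists_global_extension hU hsub hψ
      refine ⟨φ, hφ, ⟨x, hx, by rwa [(heq x (Ioo_subset_Icc_self hx)).1]⟩, ?_⟩
      unfold qform
      rw [← hIoo, ← hIoo]
      congr 1
      · refine setIntegral_congr_fun measurableSet_Ioo fun y hy => ?_
        simp only [(heq y (Ioo_subset_Icc_self hy)).1, (heq y (Ioo_subset_Icc_self hy)).2]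
      · refine setIntegral_congr_fun measurableSet_Ioo fun y hy => ?_
        simp only [(heq y (Ioo_subset_Icc_self hy)).1]
    · rintro ⟨φ, hφ, hne, rfl⟩
      refine ⟨φ, ⟨univ, isOpen_univ, subset_univ _, hφ.contDiffOn⟩, hne, ?_⟩
      unfold qform
      rw [hIoo, hIoo]
  unfold NeumannGS1
  rw [hset]
  constructor
  · intro hc φ hφ
    rw [qform_sub_const hWm hWb a b c hφ]
    by_cases hne : ∃ x ∈ Ioo a b, φ x ≠ 0
    · have hp := hpos φ hφ hne
      have hbdd : BddBelow {e | ∃ φ : ℝ → ℝ, ContDiff ℝ ∞ φ ∧ (∃ x ∈ Set.Ioo a b, φ x ≠ 0) ∧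
          e = qform W a b φ / ∫ x in a..b, φ x ^ 2} := by
        refine ⟨-K, ?_⟩
        rintro e ⟨η, hη, hηne, rfl⟩
        rw [le_div_iff₀ (hpos η hη hηne), qform_eq hWm hWb a b hη]
        have h1 := (abs_le.1 (abs_integral_pot_le hWm hWb hab.le hη.continuous)).1
        have h2 : 0 ≤ ∫ x in a..b, deriv η x ^ 2 :=
          intervalIntegral.integral_nonneg hab.le fun _ _ => sq_nonneg _
        linarith
      have := hc.trans (csInf_le hbdd ⟨φ, hφ, hne, rfl⟩)
      rw [le_div_iff₀ hp] at this
      linarith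
    · push Not at hne
      have h1 : ∫ x in a..b, φ x ^ 2 = 0 := by
        rw [← hIoo]
        exact setIntegral_eq_zero_of_forall_eq_zero fun x hx => by simp [hne x hx]
      have h2 : qform W a b φ = ∫ x in a..b, deriv φ x ^ 2 := by
        unfold qform
        rw [← hIoo, ← hIoo]
        exact setIntegral_congr_fun measurableSet_Ioo fun x hx => by simp [hne x hx]
      rw [h1, h2, mul_zero, sub_zero]
      exact intervalIntegral.integral_nonneg hab.le fun _ _ => sq_nonneg _
  · intro h
    refine le_csInf ⟨_, fun _ => 1, contDiff_const, ⟨(a + b) / 2, ⟨by linarith, by linarith⟩,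
      one_ne_zero⟩, rfl⟩ ?_
    rintro e ⟨φ, hφ, hne, rfl⟩
    have := h φ hφ
    rw [qform_sub_const hWm hWb a b c hφ] at this
    rw [le_div_iff₀ (hpos φ hφ hne)]
    linarith

end

/-! ### Kinks and exponential growth bounds -/

section
variable {W : ℝ → ℝ} {K : ℝ}

theorem qform_congr_Ioo {A B : ℝ} (hAB : A ≤ B) {ψ φ : ℝ → ℝ} (h : EqOn ψ φ (Ioo A B)) :
    qform W A B ψ = qform W A B φ := by
  unfold qform
  rw [intervalIntegral.integral_of_le hAB, intervalIntegral.integral_of_le hAB,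
    integral_Ioc_eq_integral_Ioo, integral_Ioc_eq_integral_Ioo]
  refine setIntegral_congr_fun measurableSet_Ioo fun x hx => ?_
  have h1 : ψ =ᶠ[𝓝 x] φ := by
    filter_upwards [isOpen_Ioo.mem_nhds hx] with y hy using h hy
  simp only [h1.deriv_eq, h hx]

theorem smoothTransition_deriv_bound :
    ∃ D, ∀ y : ℝ, |y * deriv Real.smoothTransition y| ≤ D ∧ |deriv Real.smoothTransition y| ≤ D := by
  have hc : Continuous (deriv Real.smoothTransition) :=
    (Real.smoothTransition.contDiff (n := 1)).continuous_deriv (by simp)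
  obtain ⟨D, hD⟩ := isCompact_Icc.exists_bound_of_continuousOn (s := Icc (0 : ℝ) 1)
    hc.continuousOn
  have hD0 : 0 ≤ D := (norm_nonneg _).trans (hD 0 (by simp))
  refine ⟨D, fun y => ?_⟩
  by_cases hy : y ∈ Icc (0 : ℝ) 1
  · have h1 := hD y hy
    rw [Real.norm_eq_abs] at h1
    refine ⟨?_, h1⟩
    rw [abs_mul, abs_of_nonneg hy.1]
    nlinarith [hy.1, hy.2, abs_nonneg (deriv Real.smoothTransition y)]
  · have h0 : deriv Real.smoothTransition y = 0 := by
      rw [mem_Icc, not_and_or, not_le, not_le] at hy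
      rcases hy with hy | hy
      · have : Real.smoothTransition =ᶠ[𝓝 y] fun _ => 0 := by
          filter_upwards [Iio_mem_nhds hy] with z hz
          exact Real.smoothTransition.zero_of_nonpos (le_of_lt hz)
        rw [this.deriv_eq, deriv_const]
      · have : Real.smoothTransition =ᶠ[𝓝 y] fun _ => 1 := by
          filter_upwards [Ioi_mem_nhds hy] with z hz
          exact Real.smoothTransition.one_of_one_le (le_of_lt hz)
        rw [this.deriv_eq, deriv_const]
    simp [h0, hD0]

/-- Nonnegativity of the form extends to test functions with one kink: here the function equal to
`ψ + v` on the left of `x₀` and to `ψ` on the right, where `v x₀ = 0`. -/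
theorem FormNonneg.kink (hWm : Measurable W) (hWb : ∀ x, |W x| ≤ K) {A B x₀ : ℝ}
    (hN : FormNonneg W A B) (hA : A ≤ x₀) (hB : x₀ ≤ B) {ψ v : ℝ → ℝ} (hψ : ContDiff ℝ ∞ ψ)
    (hv : ContDiff ℝ ∞ v) (hv0 : v x₀ = 0) :
    0 ≤ qform W A x₀ (fun x => ψ x + v x) + qform W x₀ B ψ := by
  set s : ℕ → ℝ → ℝ := fun n x => Real.smoothTransition ((n + 1 : ℝ) * (x₀ - x)) with hs
  set u : ℕ → ℝ → ℝ := fun n x => ψ x + v x * s n x with hu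
  have hsC : ∀ n, ContDiff ℝ ∞ (s n) := fun n =>
    Real.smoothTransition.contDiff.comp (by fun_prop)
  have huC : ∀ n, ContDiff ℝ ∞ (u n) := fun n => hψ.add (hv.mul (hsC n))
  have hright : ∀ n, qform W x₀ B (u n) = qform W x₀ B ψ := by
    intro n
    refine qform_congr_Ioo hB fun x hx => ?_
    have : s n x = 0 := Real.smoothTransition.zero_of_nonpos
      (mul_nonpos_of_nonneg_of_nonpos (by positivity) (by linarith [hx.1]))
    simp [hu, this]
  have hdψ : Continuous (deriv ψ) := hψ.continuous_deriv (by simp)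
  have hdv : Continuous (deriv v) := hv.continuous_deriv (by simp)
  obtain ⟨D, hD⟩ := smoothTransition_deriv_bound
  obtain ⟨a1, h1⟩ := isCompact_Icc.exists_bound_of_continuousOn (s := Icc A x₀)
    hψ.continuous.continuousOn
  obtain ⟨a2, h2⟩ := isCompact_Icc.exists_bound_of_continuousOn (s := Icc A x₀)
    hv.continuous.continuousOn
  obtain ⟨b1, h3⟩ := isCompact_Icc.exists_bound_of_continuousOn (s := Icc A x₀) hdψ.continuousOn
  obtain ⟨b2, h4⟩ := isCompact_Icc.exists_bound_of_continuousOn (s := Icc A x₀) hdv.continuousOn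
  have hb2 : 0 ≤ b2 := (norm_nonneg _).trans (h4 A ⟨le_rfl, hA⟩)
  have hlip : ∀ x ∈ Icc A x₀, |v x| ≤ b2 * |x₀ - x| := by
    intro x hx
    have := Convex.norm_image_sub_le_of_norm_deriv_le (𝕜 := ℝ) (f := v) (s := Icc A x₀) (C := b2)
      (fun y _ => (hv.differentiable (by simp)).differentiableAt) h4 (convex_Icc _ _)
      ⟨hA, le_rfl⟩ hx
    rw [hv0, sub_zero] at this
    rwa [Real.norm_eq_abs, Real.norm_eq_abs, abs_sub_comm] at this
  have hsd : ∀ n x, HasDerivAt (s n)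
      (deriv Real.smoothTransition ((n + 1 : ℝ) * (x₀ - x)) * (-(n + 1 : ℝ))) x := by
    intro n x
    have hσ : HasDerivAt Real.smoothTransition
        (deriv Real.smoothTransition ((n + 1 : ℝ) * (x₀ - x))) ((n + 1 : ℝ) * (x₀ - x)) :=
      ((Real.smoothTransition.contDiff (n := 1)).differentiable (by simp) _).hasDerivAt
    have hl : HasDerivAt (fun x => (n + 1 : ℝ) * (x₀ - x)) (-(n + 1 : ℝ)) x := by
      simpa using ((hasDerivAt_id x).const_sub x₀).const_mul (n + 1 : ℝ)
    exact hσ.comp x hl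
  have hs01 : ∀ n x, |s n x| ≤ 1 := fun n x => by
    rw [abs_of_nonneg (Real.smoothTransition.nonneg _)]
    exact Real.smoothTransition.le_one _
  have hbu : ∀ n, ∀ x ∈ Icc A x₀, |u n x| ≤ a1 + a2 := by
    intro n x hx
    have e1 := h1 x hx
    have e2 := h2 x hx
    rw [Real.norm_eq_abs] at e1 e2
    calc |u n x| ≤ |ψ x| + |v x * s n x| := abs_add_le _ _
      _ ≤ a1 + a2 := by
        rw [abs_mul]
        nlinarith [hs01 n x, abs_nonneg (v x), abs_nonneg (s n x)]
  have hbd : ∀ n, ∀ x ∈ Icc A x₀, |deriv (u n) x| ≤ b1 + b2 + b2 * D := by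
    intro n x hx
    have hd : deriv (u n) x = deriv ψ x + (deriv v x * s n x +
        v x * (deriv Real.smoothTransition ((n + 1 : ℝ) * (x₀ - x)) * (-(n + 1 : ℝ)))) :=
      (((hψ.differentiable (by simp)) x).hasDerivAt.add
        (((hv.differentiable (by simp)) x).hasDerivAt.mul (hsd n x))).deriv
    have e1 := h3 x hx
    have e2 := h4 x hx
    rw [Real.norm_eq_abs] at e1 e2
    have e3 : |deriv v x * s n x| ≤ b2 := by
      rw [abs_mul]
      nlinarith [hs01 n x, abs_nonneg (deriv v x), abs_nonneg (s n x)]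
    -- the factor `n + 1` from the chain rule is absorbed by `|v x| ≤ b2 * |x₀ - x|`
    have e4 : |v x * (deriv Real.smoothTransition ((n + 1 : ℝ) * (x₀ - x)) * (-(n + 1 : ℝ)))|
        ≤ b2 * D := by
      have e5 := (hD ((n + 1 : ℝ) * (x₀ - x))).1
      rw [abs_mul, abs_mul, abs_neg]
      rw [abs_mul, abs_mul] at e5
      calc |v x| * (|deriv Real.smoothTransition ((n + 1 : ℝ) * (x₀ - x))| * |(n + 1 : ℝ)|)
          ≤ (b2 * |x₀ - x|) *
            (|deriv Real.smoothTransition ((n + 1 : ℝ) * (x₀ - x))| * |(n + 1 : ℝ)|) :=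
            mul_le_mul_of_nonneg_right (hlip x hx) (by positivity)
        _ = b2 * (|(n + 1 : ℝ)| * |x₀ - x| *
            |deriv Real.smoothTransition ((n + 1 : ℝ) * (x₀ - x))|) := by ring
        _ ≤ b2 * D := mul_le_mul_of_nonneg_left e5 hb2
    rw [hd]
    refine (abs_add_le _ _).trans ?_
    have := abs_add_le (deriv v x * s n x)
      (v x * (deriv Real.smoothTransition ((n + 1 : ℝ) * (x₀ - x)) * (-(n + 1 : ℝ))))
    linarith
  have hK : 0 ≤ K := (abs_nonneg _).trans (hWb 0)
  have hlim : Tendsto (fun n => qform W A x₀ (u n)) atTop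
      (𝓝 (qform W A x₀ (fun x => ψ x + v x))) := by
    unfold qform
    refine intervalIntegral.tendsto_integral_filter_of_dominated_convergence
      (fun _ => (b1 + b2 + b2 * D) ^ 2 + K * (a1 + a2) ^ 2) ?_ ?_ ?_ ?_
    · refine Eventually.of_forall fun n => ?_
      have h1 : Continuous (deriv (u n)) := (huC n).continuous_deriv (by simp)
      exact ((h1.pow 2).measurable.add
        (hWm.mul ((huC n).continuous.pow 2).measurable)).aestronglyMeasurable
    · refine Eventually.of_forall fun n => Eventually.of_forall fun x hx => ?_
      rw [uIoc_of_le hA] at hx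
      have hx' := Ioc_subset_Icc_self hx
      rw [Real.norm_eq_abs]
      refine (abs_add_le _ _).trans ?_
      rw [abs_mul, abs_pow, abs_pow]
      gcongr
      · exact hbd n x hx'
      · exact hWb x
      · exact hbu n x hx'
    · exact intervalIntegrable_const
    · have hne : ∀ᵐ x : ℝ, x ≠ x₀ := by simp [ae_iff]
      filter_upwards [hne] with x hxne hx
      rw [uIoc_of_le hA] at hx
      have hlt : x < x₀ := lt_of_le_of_ne hx.2 hxne
      refine tendsto_const_nhds.congr' ?_
      obtain ⟨N, hN⟩ := exists_nat_gt (1 / ((x₀ - x) / 2))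
      filter_upwards [eventually_ge_atTop N] with n hn
      have hev : u n =ᶠ[𝓝 x] fun x => ψ x + v x := by
        filter_upwards [Iio_mem_nhds (show x < (x + x₀) / 2 by linarith)] with z hz
        have hz' : (x₀ - x) / 2 < x₀ - z := by
          have : z < (x + x₀) / 2 := hz
          linarith
        have hpos : 0 < (x₀ - x) / 2 := by linarith
        have hn' : (N : ℝ) ≤ n := by exact_mod_cast hn
        have : s n z = 1 := by
          refine Real.smoothTransition.one_of_one_le ?_
          rw [div_lt_iff₀ hpos] at hN
          nlinarith
        simp [hu, this]
      rw [hev.deriv_eq, hev.eq_of_nhds]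
  refine ge_of_tendsto (hlim.add_const _) (Eventually.of_forall fun n => ?_)
  rw [← hright n, qform_add hWm hWb A x₀ B (huC n)]
  exact hN _ (huC n)

/-- One-sided version of `FormNonneg.abs_le_exp`. The comparison function `t e^{a(x - A)}` is a
subsolution; replacing `ψ` by it up to the first crossing point would lower the form by at least
`a t²`. -/
theorem FormNonneg.le_exp (hWm : Measurable W) {a : ℝ} (ha : 0 < a)
    (hWb : ∀ x, |W x| ≤ a ^ 2) {A B : ℝ} (hN : FormNonneg W A B) {ψ : ℝ → ℝ}
    (hψ : ContDiff ℝ ∞ ψ) {t : ℝ} (ht : 0 < t) (hψA : ψ A ≤ t / 2)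
    (hR : qform W A B ψ < a * t ^ 2) :
    ∀ x ∈ Icc A B, ψ x ≤ t * Real.exp (a * (x - A)) := by
  by_contra hcon
  push Not at hcon
  obtain ⟨y, hy, hlt⟩ := hcon
  set χ : ℝ → ℝ := fun x => t * Real.exp (a * (x - A)) with hχ
  set w : ℝ → ℝ := fun x => χ x - ψ x with hw
  have hχC : ContDiff ℝ ∞ χ := by
    simp only [hχ]; fun_prop
  have hwC : ContDiff ℝ ∞ w := hχC.sub hψ
  have hwA : t / 2 ≤ w A := by simp [hw, hχ]; linarith
  obtain ⟨x₀, ⟨hx₀m, hx₀⟩, hleast⟩ : ∃ x₀, IsLeast (Icc A y ∩ w ⁻¹' Iic 0) x₀ := by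
    refine (isCompact_Icc.inter_right (isClosed_Iic.preimage hwC.continuous)).exists_isLeast ?_
    exact ⟨y, ⟨hy.1, le_rfl⟩, by simp [hw]; exact hlt.le⟩
  have hw0 : w x₀ = 0 := by
    obtain ⟨z, hz, hz0⟩ := intermediate_value_Icc' hx₀m.1 hwC.continuous.continuousOn
      (show (0 : ℝ) ∈ Icc (w x₀) (w A) from ⟨hx₀, by linarith⟩)
    have : x₀ ≤ z := hleast ⟨⟨hz.1, hz.2.trans hx₀m.2⟩, by simp [hz0]⟩
    rwa [le_antisymm hz.2 this] at hz0
  have hwnn : ∀ x ∈ Icc A x₀, 0 ≤ w x := by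
    intro x hx
    by_contra hneg
    push Not at hneg
    have : x₀ ≤ x := hleast ⟨⟨hx.1, hx.2.trans hx₀m.2⟩, hneg.le⟩
    rw [le_antisymm hx.2 this, hw0] at hneg
    exact lt_irrefl _ hneg
  have hA : A ≤ x₀ := hx₀m.1
  have hB : x₀ ≤ B := hx₀m.2.trans hy.2
  have k1 := hN.kink hWm hWb hA hB hψ hwC hw0
  have k2 := hN.kink hWm hWb hA hB (ψ := fun _ => 0) contDiff_const hwC hw0
  have e1 : (fun x => ψ x + w x) = χ := by ext x; simp [hw]
  have e2 : (fun x => 0 + w x) = w := by ext x; simp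
  have e3 : qform W x₀ B (fun _ => 0) = 0 := by simp [qform]
  rw [e1] at k1
  rw [e2, e3, add_zero] at k2
  have hdχ : ∀ x, HasDerivAt χ (a * χ x) x := by
    intro x
    have h1 : HasDerivAt (fun x => a * (x - A)) a x := by
      simpa using ((hasDerivAt_id x).sub_const A).const_mul a
    have h2 : a * χ x = t * (Real.exp (a * (x - A)) * a) := by simp only [hχ]; ring
    rw [h2]
    exact h1.exp.const_mul t
  have hdχ' : deriv χ = fun x => a * χ x := funext fun x => (hdχ x).deriv
  have hdw : ∀ x, HasDerivAt w (deriv w x) x := fun x =>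
    ((hwC.differentiable (by simp)) x).hasDerivAt
  have hdw' : ∀ x, deriv w x = deriv χ x - deriv ψ x := fun x =>
    (((hχC.differentiable (by simp)) x).hasDerivAt.sub
      ((hψ.differentiable (by simp)) x).hasDerivAt).deriv
  have hcdw : Continuous (deriv w) := hwC.continuous_deriv (by simp)
  have hcχ := hχC.continuous
  have hcw := hwC.continuous
  set C := ∫ x in A..x₀, (deriv χ x * deriv w x + W x * (χ x * w x)) with hC
  have iC : IntervalIntegrable (fun x => deriv χ x * deriv w x + W x * (χ x * w x))
      volume A x₀ := by
    refine IntervalIntegrable.add ?_ (intervalIntegrable_pot_mul hWm hWb A x₀ (hcχ.mul hcw))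
    rw [hdχ']
    exact Continuous.intervalIntegrable (by fun_prop) _ _
  have hexp : qform W A x₀ ψ = qform W A x₀ χ + qform W A x₀ w - 2 * C := by
    rw [hC, ← intervalIntegral.integral_const_mul]
    unfold qform
    rw [← intervalIntegral.integral_add (intervalIntegrable_form hWm hWb _ _ hχC)
      (intervalIntegrable_form hWm hWb _ _ hwC),
      ← intervalIntegral.integral_sub ((intervalIntegrable_form hWm hWb _ _ hχC).add
      (intervalIntegrable_form hWm hWb _ _ hwC)) (iC.const_mul 2)]
    refine intervalIntegral.integral_congr fun x _ => ?_
    have hx : ψ x = χ x - w x := by simp [hw]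
    have hx' : deriv ψ x = deriv χ x - deriv w x := by rw [hdw' x]; ring
    simp only [hx, hx']
    ring
  have hCle : C ≤ -(a * t * w A) := by
    have hle : C ≤ ∫ x in A..x₀, (a * (a * χ x) * w x + a * χ x * deriv w x) := by
      refine intervalIntegral.integral_mono_on hA iC
        (Continuous.intervalIntegrable (by fun_prop) _ _) fun x hx => ?_
      have h1 : 0 ≤ χ x * w x := mul_nonneg (by simp only [hχ]; positivity) (hwnn x hx)
      have h2 := (abs_le.1 (hWb x)).2
      simp only [hdχ']
      nlinarith
    rw [intervalIntegral.integral_eq_sub_of_hasDerivAt (f := fun x => a * χ x * w x)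
      (fun x _ => ((hdχ x).const_mul a).mul (hdw x))
      (Continuous.intervalIntegrable (by fun_prop) _ _), hw0] at hle
    have : χ A = t := by simp [hχ]
    simpa [this] using hle
  have htot := qform_add hWm hWb A x₀ B hψ
  have hat : 0 < a * t := mul_pos ha ht
  nlinarith

theorem qform_neg {A B : ℝ} (ψ : ℝ → ℝ) : qform W A B (fun x => - ψ x) = qform W A B ψ := by
  unfold qform
  refine intervalIntegral.integral_congr fun x _ => ?_
  simp

/-- If the form is nonnegative on `[A, B]`, a function that is small at `A` and has small form
grows at most exponentially away from `A`. -/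
theorem FormNonneg.abs_le_exp (hWm : Measurable W) {a : ℝ} (ha : 0 < a)
    (hWb : ∀ x, |W x| ≤ a ^ 2) {A B : ℝ} (hN : FormNonneg W A B) {ψ : ℝ → ℝ}
    (hψ : ContDiff ℝ ∞ ψ) {t : ℝ} (ht : 0 < t) (hψA : |ψ A| ≤ t / 2)
    (hR : qform W A B ψ < a * t ^ 2) :
    ∀ x ∈ Icc A B, |ψ x| ≤ t * Real.exp (a * (x - A)) := by
  intro x hx
  rw [abs_le] at hψA
  have h1 := hN.le_exp hWm ha hWb hψ ht hψA.2 hR x hx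
  have h2 := hN.le_exp hWm ha hWb hψ.neg ht (by linarith)
    (by rw [qform_neg]; exact hR) x hx
  rw [abs_le]
  constructor <;> linarith

theorem qform_reflect (c A B : ℝ) (ψ : ℝ → ℝ) :
    qform (fun x => W (c - x)) (c - B) (c - A) (fun x => ψ (c - x)) = qform W A B ψ := by
  unfold qform
  have h := intervalIntegral.integral_comp_sub_left (a := c - B) (b := c - A)
    (fun x => deriv ψ x ^ 2 + W x * ψ x ^ 2) c
  rw [sub_sub_cancel, sub_sub_cancel] at h
  rw [← h]
  refine intervalIntegral.integral_congr fun x _ => ?_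
  simp only [deriv_comp_const_sub]
  ring

/-- Mirror image of `FormNonneg.abs_le_exp`, with base point `B`. -/
theorem FormNonneg.abs_le_exp_left (hWm : Measurable W) {a : ℝ} (ha : 0 < a)
    (hWb : ∀ x, |W x| ≤ a ^ 2) {A B : ℝ} (hN : FormNonneg W A B) {ψ : ℝ → ℝ}
    (hψ : ContDiff ℝ ∞ ψ) {t : ℝ} (ht : 0 < t) (hψB : |ψ B| ≤ t / 2)
    (hR : qform W A B ψ < a * t ^ 2) :
    ∀ x ∈ Icc A B, |ψ x| ≤ t * Real.exp (a * (B - x)) := by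
  have hrefl : ∀ φ : ℝ → ℝ, ContDiff ℝ ∞ φ → ContDiff ℝ ∞ (fun x => φ (0 - x)) :=
    fun φ hφ => hφ.comp (by fun_prop)
  have hN' : FormNonneg (fun x => W (0 - x)) (0 - B) (0 - A) := by
    intro φ hφ
    have := hN _ (hrefl φ hφ)
    rw [← qform_reflect 0] at this
    simpa using this
  intro x hx
  have := hN'.abs_le_exp (W := fun x => W (0 - x)) (hWm.comp (by fun_prop)) ha (fun x => hWb _) (hrefl ψ hψ) ht
    (by simpa using hψB) (by rw [qform_reflect]; exact hR) (0 - x)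
    ⟨by linarith [hx.2], by linarith [hx.1]⟩
  convert this using 2
  · simp
  · congr 1; ring

/-- Sobolev bound for the endpoint values on a unit interval. -/
theorem endpoint_sq_le {A : ℝ} {ψ : ℝ → ℝ} (hψ : ContDiff ℝ ∞ ψ) {y : ℝ}
    (hy : y ∈ Icc A (A + 1)) :
    ψ y ^ 2 ≤ 2 * (∫ x in A..A + 1, ψ x ^ 2) + ∫ x in A..A + 1, deriv ψ x ^ 2 := by
  have hAB : A ≤ A + 1 := by linarith
  have hd : Continuous (deriv ψ) := hψ.continuous_deriv (by simp)
  have hc := hψ.continuous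
  obtain ⟨I, hI⟩ : ∃ I, I = ∫ x in A..A + 1, (ψ x ^ 2 + deriv ψ x ^ 2) := ⟨_, rfl⟩
  have hpt : ∀ x ∈ Icc A (A + 1), ψ y ^ 2 ≤ ψ x ^ 2 + I := by
    intro x hx
    have h1 : ∫ z in x..y, 2 * ψ z * deriv ψ z = ψ y ^ 2 - ψ x ^ 2 := by
      refine intervalIntegral.integral_eq_sub_of_hasDerivAt (f := fun z => ψ z ^ 2)
        (fun z _ => ?_) (Continuous.intervalIntegrable (by fun_prop) _ _)
      simpa using ((hψ.differentiable (by simp)) z).hasDerivAt.fun_pow 2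
    have h2 : |∫ z in x..y, 2 * ψ z * deriv ψ z| ≤ I := by
      refine (intervalIntegral.norm_integral_le_integral_norm_uIoc
        (f := fun z => 2 * ψ z * deriv ψ z)).trans ?_
      rw [hI, intervalIntegral.integral_of_le hAB]
      refine (setIntegral_mono_on (g := fun z => ψ z ^ 2 + deriv ψ z ^ 2) ?_ ?_
        measurableSet_uIoc fun z _ => ?_).trans ?_
      · exact (Continuous.integrableOn_uIoc (by fun_prop))
      · exact (Continuous.integrableOn_uIoc (by fun_prop))
      · rw [Real.norm_eq_abs, abs_le]
        constructor <;> nlinarith [sq_nonneg (ψ z + deriv ψ z), sq_nonneg (ψ z - deriv ψ z)]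
      · refine setIntegral_mono_set (Continuous.integrableOn_Ioc (by fun_prop))
          (Eventually.of_forall fun z => by positivity) ?_
        exact (Ioc_subset_Ioc (le_min hx.1 hy.1) (max_le hx.2 hy.2)).eventuallyLE
    rw [h1] at h2
    linarith [(abs_le.1 h2).2]
  have h3 : ∫ x in A..A + 1, ψ y ^ 2 ≤ ∫ x in A..A + 1, (ψ x ^ 2 + I) :=
    intervalIntegral.integral_mono_on hAB (Continuous.intervalIntegrable (by fun_prop) _ _)
      (Continuous.intervalIntegrable (by fun_prop) _ _) hpt
  rw [intervalIntegral.integral_add (Continuous.intervalIntegrable (by fun_prop) _ _)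
    (Continuous.intervalIntegrable (by fun_prop) _ _)] at h3
  rw [intervalIntegral.integral_add (Continuous.intervalIntegrable (by fun_prop) _ _)
    (Continuous.intervalIntegrable (by fun_prop) _ _)] at hI
  simp at h3
  linarith

end

end

/-! ### Lower bound for the finite-volume energy -/

section
open Filter Topology

theorem qform_congr_pot {W W' : ℝ → ℝ} {A B : ℝ} (hAB : A ≤ B) (h : EqOn W W' (Ioo A B))
    (ψ : ℝ → ℝ) : qform W A B ψ = qform W' A B ψ := by
  unfold qform
  rw [intervalIntegral.integral_of_le hAB, intervalIntegral.integral_of_le hAB,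
    integral_Ioc_eq_integral_Ioo, integral_Ioc_eq_integral_Ioo]
  refine setIntegral_congr_fun measurableSet_Ioo fun x hx => ?_
  simp only [h hx]

theorem qform_translate (W : ℝ → ℝ) (A B s : ℝ) (ψ : ℝ → ℝ) :
    qform (fun x => W (x + s)) A B (fun x => ψ (x + s)) = qform W (A + s) (B + s) ψ := by
  unfold qform
  rw [← intervalIntegral.integral_comp_add_right (fun x => deriv ψ x ^ 2 + W x * ψ x ^ 2) s]
  refine intervalIntegral.integral_congr fun x _ => ?_
  simp only [deriv_comp_add_const]

section
variable {q : ℝ → ℝ} {r dmax M : ℝ}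

/-- A site potential only lives on the closed unit cell around its site. -/
theorem site_eq_zero (hdmax : dmax = 1 / 2 - r) (hq_supp : ∀ x : ℝ, r < |x| → q x = 0)
    {x c w : ℝ} (hw : |w| ≤ dmax) (hx : 1 / 2 < |x - c|) : q (x - c - w) = 0 := by
  apply hq_supp
  have := abs_sub_abs_le_abs_sub (x - c) w
  linarith

/-- The bound is uniform in `L`; the value `2 * M` instead of `M` allows for cell walls, which belong
to two closed cells. -/
theorem abs_VL_le (hdmax : dmax = 1 / 2 - r) (hq_supp : ∀ x : ℝ, r < |x| → q x = 0)
    (hM : ∀ x, |q x| ≤ M) (L : ℕ) (ω : Fin L → ℝ) (hω : ∀ i, |ω i| ≤ dmax) (x : ℝ) :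
    |VL q L ω x| ≤ 2 * M := by
  have hM0 : 0 ≤ M := (abs_nonneg _).trans (hM 0)
  -- at most two closed unit cells contain `x`, those of index `n` and `n - 1`
  set n : ℤ := ⌊x + 1 / 2⌋ with hn
  have hle : ∀ i : Fin L, |q (x - ((i : ℕ) + 1 : ℝ) - ω i)| ≤
      (if ((i : ℕ) : ℤ) = n - 1 then M else 0) + (if ((i : ℕ) : ℤ) = n - 2 then M else 0) := by
    intro i
    by_cases hx : 1 / 2 < |x - ((i : ℕ) + 1 : ℝ)|
    · rw [site_eq_zero hdmax hq_supp (hω i) hx, abs_zero]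
      positivity
    · push Not at hx
      rw [abs_le] at hx
      have h1 : (((i : ℕ) : ℤ) + 1) ≤ n := by
        rw [hn, Int.le_floor]; push_cast; linarith
      have h2 : n ≤ ((i : ℕ) : ℤ) + 2 := by
        have : n < ((i : ℕ) : ℤ) + 3 := by
          rw [hn, Int.floor_lt]; push_cast; linarith
        omega
      have h3 : ((i : ℕ) : ℤ) = n - 1 ∨ ((i : ℕ) : ℤ) = n - 2 := by omega
      refine (hM _).trans ?_
      rcases h3 with h | h
      · rw [if_pos h]; split_ifs <;> linarith
      · rw [if_pos h]; split_ifs <;> linarith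
  have hcard : ∀ m : ℤ, ∑ i : Fin L, (if ((i : ℕ) : ℤ) = m then M else 0) ≤ M := by
    intro m
    rw [← Finset.sum_filter, Finset.sum_const, nsmul_eq_mul]
    have : (Finset.univ.filter fun i : Fin L => ((i : ℕ) : ℤ) = m).card ≤ 1 := by
      rw [Finset.card_le_one]
      intro a ha b hb
      simp only [Finset.mem_filter] at ha hb
      ext
      have := ha.2.trans hb.2.symm
      exact_mod_cast this
    have h' : ((Finset.univ.filter fun i : Fin L => ((i : ℕ) : ℤ) = m).card : ℝ) ≤ 1 := by
      exact_mod_cast this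
    nlinarith
  calc |VL q L ω x| ≤ ∑ i : Fin L, |q (x - ((i : ℕ) + 1 : ℝ) - ω i)| :=
        Finset.abs_sum_le_sum_abs _ _
    _ ≤ _ := Finset.sum_le_sum fun i _ => hle i
    _ ≤ 2 * M := by
      rw [Finset.sum_add_distrib]
      linarith [hcard (n - 1), hcard (n - 2)]

theorem measurable_VL (hq : Measurable q) (L : ℕ) (ω : Fin L → ℝ) : Measurable (VL q L ω) := by
  unfold VL
  fun_prop

theorem VL_cell (hdmax : dmax = 1 / 2 - r) (hq_supp : ∀ x : ℝ, r < |x| → q x = 0)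
    {L : ℕ} {ω : Fin L → ℝ} (hω : ∀ i, |ω i| ≤ dmax) (i : Fin L) {x : ℝ}
    (hx : x ∈ Ioo ((i : ℕ) + 1 / 2 : ℝ) ((i : ℕ) + 1 / 2 + 1)) :
    VL q L ω x = q (x - ((i : ℕ) + 1 : ℝ) - ω i) := by
  unfold VL
  refine Finset.sum_eq_single i (fun j _ hji => ?_) (by simp)
  refine site_eq_zero hdmax hq_supp (hω j) ?_
  have hne : (j : ℕ) ≠ (i : ℕ) := fun h => hji (Fin.ext h)
  rcases lt_or_gt_of_ne hne with h | h
  · have : ((j : ℕ) : ℝ) + 1 ≤ (i : ℕ) := by exact_mod_cast h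
    exact lt_of_lt_of_le (by linarith [hx.1]) (le_abs_self _)
  · have : ((i : ℕ) : ℝ) + 1 ≤ (j : ℕ) := by exact_mod_cast h
    exact lt_of_lt_of_le (by linarith [hx.2]) (neg_le_abs _)

theorem formNonneg_cell (hdmax : dmax = 1 / 2 - r) (hq_meas : Measurable q)
    (hq_supp : ∀ x : ℝ, r < |x| → q x = 0) (hM : ∀ x, |q x| ≤ M)
    {L : ℕ} {ω : Fin L → ℝ} (hω : ∀ i, |ω i| ≤ dmax) (i : Fin L) {c : ℝ}
    (hc : c ≤ E0fun1 q (ω i)) :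
    FormNonneg (fun x => VL q L ω x - c) ((i : ℕ) + 1 / 2 : ℝ) ((i : ℕ) + 1 / 2 + 1) := by
  unfold E0fun1 at hc
  rw [le_NeumannGS1_iff (W := fun x => q (x - ω i)) (hq_meas.comp (by fun_prop))
    (fun x => hM _) (by norm_num)] at hc
  intro ψ hψ
  have h := hc (fun x => ψ (x + ((i : ℕ) + 1 : ℝ))) (hψ.comp (by fun_prop))
  have e : ∀ W' : ℝ → ℝ, qform W' ((i : ℕ) + 1 / 2 : ℝ) ((i : ℕ) + 1 / 2 + 1) ψ =
      qform (fun x => W' (x + ((i : ℕ) + 1 : ℝ))) (-(1 / 2)) (1 / 2)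
        (fun x => ψ (x + ((i : ℕ) + 1 : ℝ))) := by
    intro W'
    rw [qform_translate]
    congr 1 <;> ring
  rw [e]
  refine h.trans_eq (qform_congr_pot (by norm_num) (fun x hx => ?_) _)
  rw [VL_cell hdmax hq_supp hω i ⟨by linarith [hx.1], by linarith [hx.2]⟩]
  congr 2; ring

/-- Neumann bracketing: nonnegativity on the cells of a box gives nonnegativity on every union of
consecutive cells. -/
theorem FormNonneg.chain {W : ℝ → ℝ} {K : ℝ} (hWm : Measurable W) (hWb : ∀ x, |W x| ≤ K)
    {L : ℕ} (h : ∀ k < L, FormNonneg W ((k : ℝ) + 1 / 2) ((k : ℝ) + 1 / 2 + 1)) {m n : ℕ}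
    (hmn : m ≤ n) (hn : n ≤ L) : FormNonneg W ((m : ℝ) + 1 / 2) ((n : ℝ) + 1 / 2) := by
  induction n, hmn using Nat.le_induction with
  | base => intro ψ _; simp [qform]
  | succ n hmn ih =>
    intro ψ hψ
    have h1 := ih (by omega) ψ hψ
    have h2 := h n (by omega) ψ hψ
    have h3 := qform_add hWm hWb ((m : ℝ) + 1 / 2) ((n : ℝ) + 1 / 2) ((n : ℝ) + 1 / 2 + 1) hψ
    push_cast
    rw [show (n : ℝ) + 1 + 1 / 2 = (n : ℝ) + 1 / 2 + 1 by ring, ← h3]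
    linarith

/-- If every cell energy is at least `e` and one of them exceeds `e` by `δ`, then the
finite-volume Neumann energy exceeds `e` by an amount exponentially small in `L` at worst. -/
theorem exists_lamN_lower (hdmax : dmax = 1 / 2 - r) (hq_meas : Measurable q)
    (hq_supp : ∀ x : ℝ, r < |x| → q x = 0) (hM : ∀ x, |q x| ≤ M) {e δ : ℝ} (hδ : 0 < δ)
    (he : ∀ a, |a| ≤ dmax → e ≤ E0fun1 q a) :
    ∃ C₁ > (0 : ℝ), ∃ s₀ > (0 : ℝ), ∀ (L : ℕ) (ω : Fin L → ℝ), (∀ i, |ω i| ≤ dmax) →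
      (∃ i, e + δ ≤ E0fun1 q (ω i)) → e + s₀ * Real.exp (-2 * C₁ * L) ≤ lamN q L ω := by
  have hM0 : 0 ≤ M := (abs_nonneg _).trans (hM 0)
  set K := 2 * M + |e| with hK
  have hK0 : 0 ≤ K := by positivity
  set a := K + 1 with ha
  have ha0 : 0 < a := by positivity
  -- `H * ρ` bounds `ψ²` on the excited cell when `ρ` is the form of `VL - e` at `ψ`
  set H := 2 / δ + 1 + K / δ with hH
  have hH0 : 0 < H := by positivity
  -- `t² = G * ρ'` is large enough for both hypotheses of `FormNonneg.abs_le_exp`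
  set G := 4 * H + 1 / a with hG
  have hG0 : 0 < G := by positivity
  refine ⟨a + 1, by positivity, 1 / G, by positivity, ?_⟩
  rintro L ω hω ⟨i, hi⟩
  have hL : 0 < L := i.pos
  have hVm := measurable_VL hq_meas L ω
  have hVb := abs_VL_le hdmax hq_supp hM L ω hω
  set W : ℝ → ℝ := fun x => VL q L ω x - e with hW
  have hWm : Measurable W := hVm.sub_const e
  have hWK : ∀ x, |W x| ≤ K := fun x => (abs_sub _ _).trans (by linarith [hVb x])
  have hWa : ∀ x, |W x| ≤ a ^ 2 := fun x => (hWK x).trans (by nlinarith)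
  have hcell : ∀ k < L, FormNonneg W ((k : ℝ) + 1 / 2) ((k : ℝ) + 1 / 2 + 1) := fun k hk =>
    formNonneg_cell hdmax hq_meas hq_supp hM hω ⟨k, hk⟩ (he _ (hω _))
  unfold lamN
  have hL0 : (0 : ℝ) < L := by exact_mod_cast hL
  rw [le_NeumannGS1_iff hVm hVb (by linarith)]
  intro ψ hψ
  set l : ℝ := (i : ℕ) + 1 / 2 with hl
  have hiL : ((i : ℕ) : ℝ) + 1 ≤ L := by exact_mod_cast i.isLt
  have hi0 : (0 : ℝ) ≤ (i : ℕ) := by positivity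
  have N1 : FormNonneg W (1 / 2) l := by
    have := FormNonneg.chain hWm hWK hcell (Nat.zero_le i) i.isLt.le
    rwa [Nat.cast_zero, zero_add] at this
  have N2 : FormNonneg W (l + 1) (L + 1 / 2) := by
    have := FormNonneg.chain hWm hWK hcell (Nat.succ_le_of_lt i.isLt) le_rfl
    push_cast at this
    rwa [show ((i : ℕ) : ℝ) + 1 + 1 / 2 = l + 1 by rw [hl]; ring] at this
  have N3 : FormNonneg W l (L + 1 / 2) := FormNonneg.chain hWm hWK hcell i.isLt.le le_rfl
  have N4 : FormNonneg W (1 / 2) (l + 1) := by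
    have := FormNonneg.chain hWm hWK hcell (Nat.zero_le (i + 1)) (Nat.succ_le_of_lt i.isLt)
    push_cast at this
    rwa [show ((i : ℕ) : ℝ) + 1 + 1 / 2 = l + 1 by rw [hl]; ring, zero_add] at this
  have a1 := qform_add hWm hWK (1 / 2) l (L + 1 / 2) hψ
  have a2 := qform_add hWm hWK (1 / 2) (l + 1) (L + 1 / 2) hψ
  have a3 := qform_add hWm hWK l (l + 1) (L + 1 / 2) hψ
  have p1 := N1 ψ hψ
  have p2 := N2 ψ hψ
  have p3 := N3 ψ hψ
  have p4 := N4 ψ hψ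
  set ρ := qform W (1 / 2) (L + 1 / 2) ψ with hρ
  have hρ0 : 0 ≤ ρ := by linarith
  have hδcell : δ * ∫ x in l..l + 1, ψ x ^ 2 ≤ ρ := by
    have h1 := formNonneg_cell hdmax hq_meas hq_supp hM hω i hi ψ hψ
    have h2 := qform_sub_const hVm hVb l (l + 1) (e + δ) hψ
    have h3 := qform_sub_const hVm hVb l (l + 1) e hψ
    have h4 : qform W l (l + 1) ψ = qform (VL q L ω) l (l + 1) ψ - e * ∫ x in l..l + 1, ψ x ^ 2 := h3
    rw [h2] at h1
    linarith
  have hend : ∀ y ∈ Icc l (l + 1), ψ y ^ 2 ≤ H * ρ := by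
    intro y hy
    have h1 := endpoint_sq_le hψ hy
    have h2 := qform_eq hWm hWK l (l + 1) hψ
    have h3 := (abs_le.1 (abs_integral_pot_le hWm hWK (show l ≤ l + 1 by linarith)
      hψ.continuous)).1
    have h4 : ∫ x in l..l + 1, ψ x ^ 2 ≤ ρ / δ := by
      rw [le_div_iff₀ hδ]; linarith
    have h5 : K * ∫ x in l..l + 1, ψ x ^ 2 ≤ K * (ρ / δ) := mul_le_mul_of_nonneg_left h4 hK0
    have h6 : H * ρ = 2 * (ρ / δ) + ρ + K * (ρ / δ) := by rw [hH]; ring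
    rw [h6]
    linarith
  -- the strict inequality in `FormNonneg.abs_le_exp` forces `ρ' > ρ`; the limit follows below
  have hmass : ∀ ρ' > ρ, ∫ x in (1 / 2 : ℝ)..L + 1 / 2, ψ x ^ 2 ≤
      L * (G * ρ' * Real.exp (2 * a * L)) := by
    intro ρ' hρ'
    have hρ'0 : 0 < ρ' := hρ0.trans_lt hρ'
    set t := Real.sqrt (G * ρ') with ht
    have ht2 : t ^ 2 = G * ρ' := Real.sq_sqrt (by positivity)
    have ht0 : 0 < t := Real.sqrt_pos.2 (by positivity)
    have hHt : H * ρ ≤ (t / 2) ^ 2 := by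
      rw [div_pow, ht2, hG]
      have : 0 < 1 / a * ρ' := by positivity
      nlinarith
    have hat : ρ < a * t ^ 2 := by
      rw [ht2, hG]
      have h1 : a * ((4 * H + 1 / a) * ρ') = 4 * a * H * ρ' + ρ' := by field_simp
      rw [h1]
      have : 0 < 4 * a * H * ρ' := by positivity
      linarith
    have hb : ∀ y ∈ Icc l (l + 1), |ψ y| ≤ t / 2 := fun y hy =>
      abs_le_of_sq_le_sq ((hend y hy).trans hHt) (by positivity)
    have hpt : ∀ x ∈ Icc (1 / 2 : ℝ) (L + 1 / 2), |ψ x| ≤ t * Real.exp (a * L) := by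
      intro x hx
      have hmono : ∀ z : ℝ, z ≤ L → t * Real.exp (a * z) ≤ t * Real.exp (a * L) := by
        intro z hz
        gcongr
      rcases le_total l x with hlx | hlx
      · refine (N3.abs_le_exp hWm ha0 hWa hψ ht0 (hb l ⟨le_rfl, by linarith⟩)
          (by linarith) x ⟨hlx, hx.2⟩).trans (hmono _ ?_)
        linarith [hx.2]
      · refine (N4.abs_le_exp_left hWm ha0 hWa hψ ht0 (hb (l + 1) ⟨by linarith, le_rfl⟩)
          (by linarith) x ⟨hx.1, by linarith⟩).trans (hmono _ ?_)
        linarith [hx.1]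
    have hsq : ∀ x ∈ Icc (1 / 2 : ℝ) (L + 1 / 2), ψ x ^ 2 ≤ G * ρ' * Real.exp (2 * a * L) := by
      intro x hx
      calc ψ x ^ 2 = |ψ x| ^ 2 := (sq_abs _).symm
        _ ≤ (t * Real.exp (a * L)) ^ 2 := by gcongr; exact hpt x hx
        _ = _ := by
          rw [mul_pow, ht2, ← Real.exp_nat_mul]; congr 2; push_cast; ring
    calc ∫ x in (1 / 2 : ℝ)..L + 1 / 2, ψ x ^ 2
        ≤ ∫ x in (1 / 2 : ℝ)..L + 1 / 2, G * ρ' * Real.exp (2 * a * L) :=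
          intervalIntegral.integral_mono_on (by linarith)
            ((hψ.continuous.pow 2).intervalIntegrable _ _) intervalIntegrable_const hsq
      _ = _ := by simp; ring
  have hmass' : ∫ x in (1 / 2 : ℝ)..L + 1 / 2, ψ x ^ 2 ≤
      L * (G * ρ * Real.exp (2 * a * L)) := by
    have hcont : Tendsto (fun ρ' : ℝ => (L : ℝ) * (G * ρ' * Real.exp (2 * a * L))) (𝓝[>] ρ)
        (𝓝 (L * (G * ρ * Real.exp (2 * a * L)))) :=
      (Continuous.tendsto (by fun_prop) ρ).mono_left nhdsWithin_le_nhds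
    exact ge_of_tendsto hcont (eventually_nhdsWithin_of_forall hmass)
  -- the volume factor `L` is the reason for `C₁ = a + 1` instead of `a`
  have hLexp : (L : ℝ) ≤ Real.exp (2 * L) := by
    have := Real.add_one_le_exp (2 * L : ℝ)
    linarith
  have hfin : ∫ x in (1 / 2 : ℝ)..L + 1 / 2, ψ x ^ 2 ≤ G * ρ * Real.exp (2 * (a + 1) * L) := by
    refine hmass'.trans ?_
    rw [show 2 * (a + 1) * (L : ℝ) = 2 * L + 2 * a * L by ring, Real.exp_add]
    have : 0 ≤ G * ρ * Real.exp (2 * a * L) := by positivity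
    nlinarith
  have hs := qform_sub_const hVm hVb (1 / 2) (L + 1 / 2)
    (e + 1 / G * Real.exp (-2 * (a + 1) * L)) hψ
  have hs' : ρ = qform (VL q L ω) (1 / 2) (L + 1 / 2) ψ -
      e * ∫ x in (1 / 2 : ℝ)..L + 1 / 2, ψ x ^ 2 := qform_sub_const hVm hVb _ _ e hψ
  rw [hs]
  have : 1 / G * Real.exp (-2 * (a + 1) * L) * ∫ x in (1 / 2 : ℝ)..L + 1 / 2, ψ x ^ 2 ≤ ρ := by
    calc _ ≤ 1 / G * Real.exp (-2 * (a + 1) * L) * (G * ρ * Real.exp (2 * (a + 1) * L)) :=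
          mul_le_mul_of_nonneg_left hfin (by positivity)
      _ = ρ * (Real.exp (-2 * (a + 1) * L) * Real.exp (2 * (a + 1) * L)) := by
          field_simp
      _ = ρ := by
          rw [← Real.exp_add, show -2 * (a + 1) * (L : ℝ) + 2 * (a + 1) * L = 0 by ring]
          simp
  linarith

end

/-! ### Whole-line energies and the alternating configuration -/

section
variable {q : ℝ → ℝ} {r dmax M : ℝ}

/-- Only the two sites nearest to `x` can contribute to the potential at `x`. -/
theorem site_ne_zero_int (hdmax : dmax = 1 / 2 - r) (hq_supp : ∀ x : ℝ, r < |x| → q x = 0)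
    {ω : ℤ → ℝ} (hω : ∀ i, |ω i| ≤ dmax) (x : ℝ) (i : ℤ)
    (hi : i ∉ ({⌊x + 1 / 2⌋, ⌊x + 1 / 2⌋ - 1} : Finset ℤ)) : q (x - i - ω i) = 0 := by
  refine site_eq_zero hdmax hq_supp (hω i) ?_
  by_contra hx
  push Not at hx
  rw [abs_le] at hx
  have h1 : i ≤ ⌊x + 1 / 2⌋ := by
    rw [Int.le_floor]; linarith
  have h2 : ⌊x + 1 / 2⌋ < i + 2 := by
    rw [Int.floor_lt]; push_cast; linarith
  simp only [Finset.mem_insert, Finset.mem_singleton, not_or] at hi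
  omega

theorem abs_Vpot1_le (hdmax : dmax = 1 / 2 - r) (hq_supp : ∀ x : ℝ, r < |x| → q x = 0)
    (hM : ∀ x, |q x| ≤ M) {ω : ℤ → ℝ} (hω : ∀ i, |ω i| ≤ dmax) (x : ℝ) :
    |Vpot1 q ω x| ≤ 2 * M := by
  unfold Vpot1
  rw [tsum_eq_sum (site_ne_zero_int hdmax hq_supp hω x), Finset.sum_pair (by omega)]
  refine (abs_add_le _ _).trans ?_
  linarith [hM (x - ⌊x + 1 / 2⌋ - ω ⌊x + 1 / 2⌋),
    hM (x - ((⌊x + 1 / 2⌋ - 1 : ℤ) : ℝ) - ω (⌊x + 1 / 2⌋ - 1))]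

theorem measurable_Vpot1 (hdmax : dmax = 1 / 2 - r) (hq_meas : Measurable q)
    (hq_supp : ∀ x : ℝ, r < |x| → q x = 0) {ω : ℤ → ℝ} (hω : ∀ i, |ω i| ≤ dmax) :
    Measurable (Vpot1 q ω) := by
  refine measurable_of_tendsto_metrizable' (atTop : Filter (Finset ℤ))
    (f := fun s x => ∑ i ∈ s, q (x - i - ω i)) (fun s => by fun_prop) ?_
  rw [tendsto_pi_nhds]
  intro x
  have hv : Vpot1 q ω x = ∑ i ∈ ({⌊x + 1 / 2⌋, ⌊x + 1 / 2⌋ - 1} : Finset ℤ), q (x - i - ω i) :=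
    tsum_eq_sum (site_ne_zero_int hdmax hq_supp hω x)
  rw [hv]
  refine tendsto_const_nhds.congr' ?_
  filter_upwards [eventually_ge_atTop ({⌊x + 1 / 2⌋, ⌊x + 1 / 2⌋ - 1} : Finset ℤ)] with s hs
  exact Finset.sum_subset hs fun i _ hi => site_ne_zero_int hdmax hq_supp hω x i hi

/-- No integrability of the energy density is assumed: if it fails, the quotient is `0`. -/
theorem neg_le_rayleigh (hdmax : dmax = 1 / 2 - r)
    (hq_supp : ∀ x : ℝ, r < |x| → q x = 0) (hM : ∀ x, |q x| ≤ M) {ω : ℤ → ℝ}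
    (hω : ∀ i, |ω i| ≤ dmax) {ψ : ℝ → ℝ} (hψ : Continuous ψ) (hc : HasCompactSupport ψ) :
    -(2 * M) ≤ (∫ x, (deriv ψ x ^ 2 + Vpot1 q ω x * ψ x ^ 2)) / ∫ x, ψ x ^ 2 := by
  have hM0 : 0 ≤ M := (abs_nonneg _).trans (hM 0)
  have hcs : HasCompactSupport fun x => ψ x ^ 2 :=
    HasCompactSupport.comp_left (g := fun y : ℝ => y ^ 2) hc (by simp)
  have hi : Integrable (fun x => ψ x ^ 2) :=
    Continuous.integrable_of_hasCompactSupport (by fun_prop) hcs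
  have hD : 0 ≤ ∫ x, ψ x ^ 2 := integral_nonneg fun x => sq_nonneg _
  by_cases h_int : Integrable fun x => deriv ψ x ^ 2 + Vpot1 q ω x * ψ x ^ 2
  · have hle : -(2 * M) * ∫ x, ψ x ^ 2 ≤ ∫ x, (deriv ψ x ^ 2 + Vpot1 q ω x * ψ x ^ 2) := by
      rw [← integral_const_mul]
      refine integral_mono (hi.const_mul _) h_int fun x => ?_
      have h1 := (abs_le.1 (abs_Vpot1_le hdmax hq_supp hM hω x)).1
      have h2 := mul_le_mul_of_nonneg_right h1 (sq_nonneg (ψ x))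
      have h3 := sq_nonneg (deriv ψ x)
      simp only
      linarith
    rcases hD.eq_or_lt with hD | hD
    · rw [← hD, div_zero]; linarith
    · rwa [le_div_iff₀ hD]
  · rw [integral_undef h_int, zero_div]
    linarith

theorem neg_le_Energy1 (hdmax : dmax = 1 / 2 - r)
    (hq_supp : ∀ x : ℝ, r < |x| → q x = 0) (hM : ∀ x, |q x| ≤ M) {ω : ℤ → ℝ}
    (hω : ∀ i, |ω i| ≤ dmax) : -(2 * M) ≤ Energy1 q ω := by
  have hM0 : 0 ≤ M := (abs_nonneg _).trans (hM 0)
  refine Real.le_sInf ?_ (by linarith)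
  rintro e ⟨ψ, hψ, hc, -, rfl⟩
  exact neg_le_rayleigh hdmax hq_supp hM hω hψ.continuous hc

theorem GroundEnergy1_le (hdmax : dmax = 1 / 2 - r)
    (hq_supp : ∀ x : ℝ, r < |x| → q x = 0) (hM : ∀ x, |q x| ≤ M) {ω : ℤ → ℝ}
    (hω : ∀ i, |ω i| ≤ dmax) : GroundEnergy1 q dmax ≤ Energy1 q ω := by
  refine csInf_le ⟨-(2 * M), ?_⟩ ⟨ω, hω, rfl⟩
  rintro e ⟨ν, hν, rfl⟩
  exact neg_le_Energy1 hdmax hq_supp hM hν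

/-- The variational inequality for `E(ω)`, free of the division and of the condition `ψ ≠ 0`. -/
theorem Energy1_mul_le (hdmax : dmax = 1 / 2 - r)
    (hq_supp : ∀ x : ℝ, r < |x| → q x = 0) (hM : ∀ x, |q x| ≤ M) {ω : ℤ → ℝ}
    (hω : ∀ i, |ω i| ≤ dmax) {ψ : ℝ → ℝ} (hψ : ContDiff ℝ (⊤ : ℕ∞) ψ)
    (hc : HasCompactSupport ψ) :
    Energy1 q ω * ∫ x, ψ x ^ 2 ≤ ∫ x, (deriv ψ x ^ 2 + Vpot1 q ω x * ψ x ^ 2) := by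
  by_cases h0 : ψ = 0
  · subst h0; simp
  · have hD : 0 < ∫ x, ψ x ^ 2 := by
      obtain ⟨x, hx⟩ := Function.ne_iff.1 h0
      refine (hψ.continuous.pow 2).integral_pos_of_hasCompactSupport_nonneg_nonzero
        (hc.comp_left (g := fun y => y ^ 2) (by simp)) (fun x => sq_nonneg (ψ x)) (x := x) ?_
      simpa using hx
    rw [← le_div_iff₀ hD]
    refine csInf_le ⟨-(2 * M), ?_⟩ ⟨ψ, hψ, hc, h0, rfl⟩
    rintro e ⟨φ, hφ, hφc, -, rfl⟩
    exact neg_le_rayleigh hdmax hq_supp hM hω hφ.continuous hφc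

/-- The alternating configuration `± dmax`, in which the site potentials gather in pairs at every
other cell wall. -/
def altConf (dmax : ℝ) (i : ℤ) : ℝ := if Even i then dmax else -dmax

theorem abs_altConf (h : 0 ≤ dmax) (i : ℤ) : |altConf dmax i| ≤ dmax := by
  unfold altConf
  split_ifs <;> simp [abs_of_nonneg h]

theorem Vpot1_alt_add_two (x : ℝ) :
    Vpot1 q (altConf dmax) (x + 2) = Vpot1 q (altConf dmax) x := by
  unfold Vpot1
  rw [← (Equiv.addRight (2 : ℤ)).tsum_eq]
  refine tsum_congr fun i => ?_
  have : altConf dmax (i + 2) = altConf dmax i := by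
    unfold altConf
    simp
  simp only [Equiv.coe_addRight, this]
  congr 1; push_cast; ring

theorem Vpot1_alt_one_sub (hq_symm : ∀ x : ℝ, q (-x) = q x) (x : ℝ) :
    Vpot1 q (altConf dmax) (1 - x) = Vpot1 q (altConf dmax) x := by
  unfold Vpot1
  rw [← (Equiv.subLeft (1 : ℤ)).tsum_eq]
  refine tsum_congr fun i => ?_
  have : altConf dmax (1 - i) = -altConf dmax i := by
    unfold altConf
    have he : Even (1 - i) ↔ ¬ Even i := by simp [Int.even_sub]
    by_cases h : Even i <;> simp [h, he]
  simp only [Equiv.subLeft_apply, this]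
  rw [← hq_symm]
  congr 1; push_cast; ring

theorem Vpot1_alt_cell (h0 : 0 ≤ dmax) (hdmax : dmax = 1 / 2 - r)
    (hq_supp : ∀ x : ℝ, r < |x| → q x = 0) {x : ℝ} (hx : x ∈ Ioo (-(1 / 2) : ℝ) (1 / 2)) :
    Vpot1 q (altConf dmax) x = q (x - dmax) := by
  unfold Vpot1
  rw [tsum_eq_single (0 : ℤ)]
  · simp [altConf]
  · intro i hi
    refine site_eq_zero hdmax hq_supp (abs_altConf h0 i) ?_
    rcases lt_or_gt_of_ne hi with h | h
    · have : (i : ℝ) + 1 ≤ 0 := by exact_mod_cast h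
      exact lt_of_lt_of_le (by linarith [hx.1]) (le_abs_self _)
    · have : (1 : ℝ) ≤ i := by exact_mod_cast h
      exact lt_of_lt_of_le (by linarith [hx.2]) (neg_le_abs _)

/-- A smooth function that is constant near both ends of `[-1/2, 1/2]` extends by repeated
reflection to a smooth function on the line. The extension is `g (sin (π x))` with
`g s = φ (arcsin s / π)`; constancy near the ends compensates the singularity of `arcsin` at
`± 1`. -/
theorem exists_reflection_extension {φ : ℝ → ℝ} (hφ : ContDiff ℝ (⊤ : ℕ∞) φ) {η : ℝ} (hη : 0 < η)
    (hr : ∀ x, 1 / 2 - η ≤ x → φ x = φ (1 / 2))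
    (hl : ∀ x, x ≤ -(1 / 2) + η → φ x = φ (-(1 / 2))) :
    ∃ Φ : ℝ → ℝ, ContDiff ℝ (⊤ : ℕ∞) Φ ∧ (∀ x ∈ Icc (-(1 / 2) : ℝ) (1 / 2), Φ x = φ x) ∧
      (∀ x, Φ (x + 2) = Φ x) ∧ ∀ x, Φ (1 - x) = Φ x := by
  set g : ℝ → ℝ := fun s => φ (Real.arcsin s / Real.pi) with hg
  have hπ := Real.pi_pos
  have hgC : ContDiff ℝ (⊤ : ℕ∞) g := by
    rw [contDiff_iff_contDiffAt]
    intro s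
    have hcont : Continuous fun s => Real.arcsin s / Real.pi :=
      Real.continuous_arcsin.div_const _
    by_cases h1 : s = 1
    · refine (contDiffAt_const (c := φ (1 / 2))).congr_of_eventuallyEq ?_
      have : Real.arcsin s / Real.pi = 1 / 2 := by
        rw [h1, Real.arcsin_one]; field_simp
      filter_upwards [hcont.continuousAt.eventually (lt_mem_nhds
        (show 1 / 2 - η < Real.arcsin s / Real.pi by linarith))] with z hz
      exact hr _ hz.le
    by_cases h2 : s = -1
    · refine (contDiffAt_const (c := φ (-(1 / 2)))).congr_of_eventuallyEq ?_
      have : Real.arcsin s / Real.pi = -(1 / 2) := by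
        rw [h2, Real.arcsin_neg_one]; field_simp
      filter_upwards [hcont.continuousAt.eventually (gt_mem_nhds
        (show Real.arcsin s / Real.pi < -(1 / 2) + η by linarith))] with z hz
      exact hl _ hz.le
    · exact hφ.contDiffAt.comp s ((Real.contDiffAt_arcsin h2 h1).div_const _)
  refine ⟨fun x => g (Real.sin (Real.pi * x)), hgC.comp ?_, ?_, ?_, ?_⟩
  · exact Real.contDiff_sin.comp (contDiff_const.mul contDiff_id)
  · intro x hx
    simp only [hg]
    rw [Real.arcsin_sin (by nlinarith [hx.1]) (by nlinarith [hx.2])]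
    congr 1; field_simp
  · intro x
    simp only
    rw [show Real.pi * (x + 2) = Real.pi * x + 2 * Real.pi by ring, Real.sin_add_two_pi]
  · intro x
    simp only
    rw [show Real.pi * (1 - x) = Real.pi - Real.pi * x by ring, Real.sin_pi_sub]

end

/-! ### Upper bound for the ground-state energy -/

section

/-- Period `2` and symmetry about `1/2` give symmetry about all cell walls. -/
theorem symm_odd {f : ℝ → ℝ} (hper : ∀ x, f (x + 2) = f x) (hsym : ∀ x, f (1 - x) = f x)
    (k : ℤ) (x : ℝ) : f (2 * k + 1 - x) = f x := by
  have h : Function.Periodic f 2 := hper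
  rw [← hsym x, ← h.int_mul k (1 - x)]
  congr 1; ring

/-- If the form of a reflection-periodic potential is nonnegative on compactly supported test
functions, then it is nonnegative over one cell for every reflection-periodic `Φ`. Indeed, cutting
`Φ` off outside `2 * N` cells leaves two boundary terms which do not depend on `N`. -/
theorem cell_qform_nonneg {W : ℝ → ℝ} {K : ℝ} (hWm : Measurable W) (hWb : ∀ x, |W x| ≤ K)
    (hWper : ∀ x, W (x + 2) = W x) (hWsym : ∀ x, W (1 - x) = W x)
    (hglob : ∀ A B : ℝ, ∀ ψ : ℝ → ℝ, A ≤ B → ContDiff ℝ (⊤ : ℕ∞) ψ →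
      (∀ x, x ∉ Ioo A B → ψ x = 0) → 0 ≤ qform W A B ψ)
    {Φ : ℝ → ℝ} (hΦ : ContDiff ℝ (⊤ : ℕ∞) Φ)
    (hper : ∀ x, Φ (x + 2) = Φ x) (hsym : ∀ x, Φ (1 - x) = Φ x) :
    0 ≤ qform W (-(1 / 2)) (1 / 2) Φ := by
  set X := qform W (-(1 / 2)) (1 / 2) Φ with hX
  -- all cells contribute equally, since each is the mirror image of its neighbour
  have hcell : ∀ k : ℕ, qform W (k - 1 / 2) (k + 1 / 2) Φ = X := by
    intro k
    induction k with
    | zero => rw [hX]; congr 1 <;> norm_num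
    | succ k ih =>
      rw [← ih, ← qform_reflect (2 * (k : ℤ) + 1) (k - 1 / 2) (k + 1 / 2) Φ]
      simp only [symm_odd hWper hWsym, symm_odd hper hsym]
      congr 1 <;> push_cast <;> ring
  have hcells : ∀ k : ℕ, qform W (-(1 / 2)) (k - 1 / 2) Φ = k * X := by
    intro k
    induction k with
    | zero =>
      have : ((0 : ℕ) : ℝ) - 1 / 2 = -(1 / 2) := by norm_num
      rw [this]; simp [qform]
    | succ k ih =>
      rw [← qform_add hWm hWb (-(1 / 2)) (k - 1 / 2) _ hΦ, ih,
        show ((k + 1 : ℕ) : ℝ) - 1 / 2 = k + 1 / 2 by push_cast; ring, hcell]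
      push_cast; ring
  set σ := Real.smoothTransition
  have hσ : ContDiff ℝ (⊤ : ℕ∞) σ := Real.smoothTransition.contDiff
  set b := qform W (-2) (-(1 / 2)) (fun x => Φ x * σ (x + 3 / 2)) with hb
  have key : ∀ N : ℕ, 1 ≤ N → 0 ≤ 2 * b + 2 * N * X := by
    intro N hN
    have hN' : (1 : ℝ) ≤ N := by exact_mod_cast hN
    set ψ : ℝ → ℝ := fun x => Φ x * (σ (x + 3 / 2) * σ (2 * N + 1 / 2 - x)) with hψd
    have hψ : ContDiff ℝ (⊤ : ℕ∞) ψ := by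
      refine hΦ.mul ((hσ.comp (contDiff_id.add contDiff_const)).mul
        (hσ.comp (contDiff_const.sub contDiff_id)))
    have h0 : 0 ≤ qform W (-2) (2 * N + 1) ψ := by
      refine hglob _ _ ψ (by linarith) hψ fun x hx => ?_
      simp only [mem_Ioo, not_and_or, not_lt] at hx
      rcases hx with hx | hx
      · have : σ (x + 3 / 2) = 0 := Real.smoothTransition.zero_of_nonpos (by linarith)
        simp only [hψd, this, mul_zero, zero_mul]
      · have : σ (2 * N + 1 / 2 - x) = 0 := Real.smoothTransition.zero_of_nonpos (by linarith)
        simp only [hψd, this, mul_zero]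
    have hleft : qform W (-2) (-(1 / 2)) ψ = b := by
      refine qform_congr_Ioo (by norm_num) fun x hx => ?_
      have : σ (2 * N + 1 / 2 - x) = 1 :=
        Real.smoothTransition.one_of_one_le (by linarith [hx.2])
      simp only [hψd, this, mul_one]
    have hmid : qform W (-(1 / 2)) (2 * N - 1 / 2) ψ = 2 * N * X := by
      rw [qform_congr_Ioo (φ := Φ) (by linarith)]
      · have := hcells (2 * N)
        push_cast at this
        exact this
      · intro x hx
        have h1 : σ (2 * N + 1 / 2 - x) = 1 :=
          Real.smoothTransition.one_of_one_le (by linarith [hx.2])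
        have h2 : σ (x + 3 / 2) = 1 :=
          Real.smoothTransition.one_of_one_le (by linarith [hx.1])
        simp only [hψd, h1, h2, mul_one]
    have hright : qform W (2 * N - 1 / 2) (2 * N + 1) ψ = b := by
      have hc : (2 * ((N : ℤ) - 1 : ℤ) + 1 : ℝ) = 2 * N - 1 := by push_cast; ring
      rw [← qform_reflect (2 * ((N : ℤ) - 1 : ℤ) + 1) _ _ ψ]
      simp only [symm_odd hWper hWsym]
      rw [hc, show (2 * (N : ℝ) - 1 - (2 * N + 1)) = -2 by ring,
        show (2 * (N : ℝ) - 1 - (2 * N - 1 / 2)) = -(1 / 2) by ring]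
      refine qform_congr_Ioo (by norm_num) fun x hx => ?_
      have h1 : σ (2 * N - 1 - x + 3 / 2) = 1 :=
        Real.smoothTransition.one_of_one_le (by linarith [hx.2])
      have h2 : Φ (2 * N - 1 - x) = Φ x := by rw [← hc]; exact symm_odd hper hsym _ x
      simp only [hψd, h1, h2, one_mul]
      congr 2; ring
    rw [← qform_add hWm hWb (-2) (2 * N - 1 / 2) _ hψ,
      ← qform_add hWm hWb (-2) (-(1 / 2)) _ hψ, hleft, hmid, hright] at h0
    linarith
  by_contra hneg
  push Not at hneg
  obtain ⟨N, hN⟩ := exists_nat_gt (b / (-X))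
  rw [div_lt_iff₀ (by linarith)] at hN
  have := key (N + 1) (by omega)
  push_cast at this
  nlinarith

/-- To check nonnegativity of the form on a cell it suffices to consider functions that are
constant near both ends: damping the derivative of `ψ` by a cutoff and integrating approximates `ψ`. -/
theorem formNonneg_of_flat {W : ℝ → ℝ} {K : ℝ} (hWm : Measurable W) (hWb : ∀ x, |W x| ≤ K)
    (h : ∀ φ : ℝ → ℝ, ∀ η > 0, ContDiff ℝ (⊤ : ℕ∞) φ →
      (∀ x, 1 / 2 - η ≤ x → φ x = φ (1 / 2)) →
      (∀ x, x ≤ -(1 / 2) + η → φ x = φ (-(1 / 2))) → 0 ≤ qform W (-(1 / 2)) (1 / 2) φ) :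
    FormNonneg W (-(1 / 2)) (1 / 2) := by
  intro ψ hψ
  set σ := Real.smoothTransition
  have hσ : ContDiff ℝ (⊤ : ℕ∞) σ := Real.smoothTransition.contDiff
  set χ : ℕ → ℝ → ℝ := fun n x =>
    σ (((n : ℝ) + 1) * (x + 1 / 2) - 1) * σ (((n : ℝ) + 1) * (1 / 2 - x) - 1) with hχ
  have hχC : ∀ n, ContDiff ℝ (⊤ : ℕ∞) (χ n) := fun n =>
    (hσ.comp ((contDiff_const.mul (contDiff_id.add contDiff_const)).sub contDiff_const)).mul
      (hσ.comp ((contDiff_const.mul (contDiff_const.sub contDiff_id)).sub contDiff_const))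
  have hχ1 : ∀ n x, |χ n x| ≤ 1 := by
    intro n x
    have h1 := Real.smoothTransition.nonneg (((n : ℝ) + 1) * (x + 1 / 2) - 1)
    have h2 := Real.smoothTransition.nonneg (((n : ℝ) + 1) * (1 / 2 - x) - 1)
    have h3 := Real.smoothTransition.le_one (((n : ℝ) + 1) * (x + 1 / 2) - 1)
    have h4 := Real.smoothTransition.le_one (((n : ℝ) + 1) * (1 / 2 - x) - 1)
    rw [abs_of_nonneg (mul_nonneg h1 h2)]
    exact mul_le_one₀ h3 h2 h4
  have hχlim : ∀ x ∈ Ioo (-(1 / 2) : ℝ) (1 / 2), ∀ᶠ n in atTop, χ n x = 1 := by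
    intro x hx
    have aux : ∀ d : ℝ, 0 < d → ∀ᶠ n : ℕ in atTop, σ (((n : ℝ) + 1) * d - 1) = 1 := by
      intro d hd
      filter_upwards [(tendsto_natCast_atTop_atTop (R := ℝ)).eventually_ge_atTop (2 / d)]
        with n hn
      refine Real.smoothTransition.one_of_one_le ?_
      rw [div_le_iff₀ hd] at hn
      nlinarith
    filter_upwards [aux (x + 1 / 2) (by linarith [hx.1]), aux (1 / 2 - x) (by linarith [hx.2])]
      with n h1 h2
    simp only [hχ, h1, h2, one_mul]
  have hψ' : ContDiff ℝ (⊤ : ℕ∞) (deriv ψ) := (contDiff_infty_iff_deriv.1 hψ).2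
  set φ : ℕ → ℝ → ℝ := fun n x => ψ 0 + ∫ t in (0 : ℝ)..x, deriv ψ t * χ n t with hφ
  have hcont : ∀ n, Continuous fun t => deriv ψ t * χ n t := fun n =>
    hψ'.continuous.mul (hχC n).continuous
  have hφd : ∀ n x, HasDerivAt (φ n) (deriv ψ x * χ n x) x := fun n x =>
    ((hcont n).integral_hasStrictDerivAt 0 x).hasDerivAt.const_add _
  have hφderiv : ∀ n, deriv (φ n) = fun x => deriv ψ x * χ n x := fun n =>
    funext fun x => (hφd n x).deriv
  have hφC : ∀ n, ContDiff ℝ (⊤ : ℕ∞) (φ n) := by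
    intro n
    rw [contDiff_infty_iff_deriv, hφderiv]
    exact ⟨fun x => (hφd n x).differentiableAt, hψ'.mul (hχC n)⟩
  obtain ⟨b, hb⟩ := isCompact_Icc.exists_bound_of_continuousOn (s := Icc (-(1 / 2) : ℝ) (1 / 2))
    hψ'.continuous.continuousOn
  have hb0 : 0 ≤ b := (norm_nonneg _).trans (hb 0 (by constructor <;> norm_num))
  have hdb : ∀ n, ∀ x ∈ Icc (-(1 / 2) : ℝ) (1 / 2), |deriv ψ x * χ n x| ≤ b := by
    intro n x hx
    rw [abs_mul]
    calc _ ≤ b * 1 := mul_le_mul (hb x hx) (hχ1 n x) (abs_nonneg _) hb0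
      _ = b := mul_one b
  have hsub : ∀ x ∈ Icc (-(1 / 2) : ℝ) (1 / 2), uIcc 0 x ⊆ Icc (-(1 / 2) : ℝ) (1 / 2) := by
    intro x hx
    exact uIcc_subset_Icc (by constructor <;> norm_num) hx
  have hφb : ∀ n, ∀ x ∈ Icc (-(1 / 2) : ℝ) (1 / 2), |φ n x| ≤ |ψ 0| + b := by
    intro n x hx
    refine (abs_add_le _ _).trans ?_
    gcongr
    have := intervalIntegral.norm_integral_le_of_norm_le_const (a := 0) (b := x) (C := b)
      (f := fun t => deriv ψ t * χ n t)
      fun t ht => hdb n t (hsub x hx (uIoc_subset_uIcc ht))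
    rw [Real.norm_eq_abs] at this
    refine this.trans ?_
    have : |x - 0| ≤ 1 := by rw [sub_zero, abs_le]; constructor <;> linarith [hx.1, hx.2]
    nlinarith
  have hφlim : ∀ x ∈ Ioo (-(1 / 2) : ℝ) (1 / 2), Tendsto (fun n => φ n x) atTop (𝓝 (ψ x)) := by
    intro x hx
    have hs : uIcc 0 x ⊆ Ioo (-(1 / 2) : ℝ) (1 / 2) := by
      intro t ht
      rw [mem_uIcc] at ht
      rcases ht with ht | ht <;> constructor <;> linarith [hx.1, hx.2, ht.1, ht.2]
    have hlim : Tendsto (fun n => ∫ t in (0 : ℝ)..x, deriv ψ t * χ n t) atTop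
        (𝓝 (∫ t in (0 : ℝ)..x, deriv ψ t)) := by
      refine intervalIntegral.tendsto_integral_filter_of_dominated_convergence (fun _ => b)
        (.of_forall fun n => (hcont n).aestronglyMeasurable)
        (.of_forall fun n => .of_forall fun t ht =>
          hdb n t (hsub x (Ioo_subset_Icc_self hx) (uIoc_subset_uIcc ht)))
        intervalIntegrable_const (.of_forall fun t ht => ?_)
      refine tendsto_const_nhds.congr' ?_
      filter_upwards [hχlim t (hs (uIoc_subset_uIcc ht))] with n hn
      rw [hn, mul_one]
    have h_int : ∫ t in (0 : ℝ)..x, deriv ψ t = ψ x - ψ 0 :=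
      intervalIntegral.integral_deriv_eq_sub
        (fun t _ => (hψ.differentiable (by simp)).differentiableAt)
        (hψ'.continuous.intervalIntegrable _ _)
    have := hlim.const_add (ψ 0)
    rwa [h_int, add_sub_cancel] at this
  have hnonneg : ∀ n, 0 ≤ qform W (-(1 / 2)) (1 / 2) (φ n) := by
    intro n
    have hn : (0 : ℝ) < n + 1 := by positivity
    have hη : (0 : ℝ) < 1 / (n + 1) := by positivity
    have hηm : ((n : ℝ) + 1) * (1 / (n + 1)) = 1 := by field_simp
    have hz1 : ∀ x, 1 / 2 - 1 / ((n : ℝ) + 1) ≤ x → deriv ψ x * χ n x = 0 := by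
      intro x hx
      have : σ (((n : ℝ) + 1) * (1 / 2 - x) - 1) = 0 :=
        Real.smoothTransition.zero_of_nonpos (by nlinarith)
      simp only [hχ, this, mul_zero]
    have hz2 : ∀ x, x ≤ -(1 / 2) + 1 / ((n : ℝ) + 1) → deriv ψ x * χ n x = 0 := by
      intro x hx
      have : σ (((n : ℝ) + 1) * (x + 1 / 2) - 1) = 0 :=
        Real.smoothTransition.zero_of_nonpos (by nlinarith)
      simp only [hχ, this, mul_zero, zero_mul]
    have hdiff : ∀ x y, φ n x - φ n y = ∫ t in y..x, deriv ψ t * χ n t := by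
      intro x y
      have := intervalIntegral.integral_add_adjacent_intervals
        ((hcont n).intervalIntegrable (μ := volume) 0 y) ((hcont n).intervalIntegrable y x)
      simp only [hφ]
      linarith
    refine h (φ n) _ hη (hφC n) (fun x hx => ?_) fun x hx => ?_
    · rw [← sub_eq_zero, hdiff, intervalIntegral.integral_congr (g := fun _ => 0)]
      · simp
      · intro t ht
        rw [mem_uIcc] at ht
        exact hz1 t (by rcases ht with ht | ht <;> linarith [ht.1])
    · rw [← sub_eq_zero, hdiff, intervalIntegral.integral_congr (g := fun _ => 0)]
      · simp
      · intro t ht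
        rw [mem_uIcc] at ht
        exact hz2 t (by rcases ht with ht | ht <;> linarith [ht.2])
  have hlim : Tendsto (fun n => qform W (-(1 / 2)) (1 / 2) (φ n)) atTop
      (𝓝 (qform W (-(1 / 2)) (1 / 2) ψ)) := by
    have hK0 : 0 ≤ K := (abs_nonneg _).trans (hWb 0)
    refine intervalIntegral.tendsto_integral_filter_of_dominated_convergence
      (fun _ => b ^ 2 + K * (|ψ 0| + b) ^ 2)
      (.of_forall fun n => ?_) (.of_forall fun n => .of_forall fun x hx => ?_)
      intervalIntegrable_const ?_
    · have := intervalIntegrable_form hWm hWb (-(1 / 2)) (1 / 2) (hφC n)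
      rw [intervalIntegrable_iff] at this
      exact this.aestronglyMeasurable
    · rw [uIoc_of_le (by norm_num)] at hx
      have hx' := Ioc_subset_Icc_self hx
      rw [hφderiv, Real.norm_eq_abs]
      refine (abs_add_le _ _).trans ?_
      rw [abs_mul (W x), abs_pow, abs_pow]
      have h1 := hdb n x hx'
      have h2 := hφb n x hx'
      have h3 := hWb x
      gcongr
    · have : ∀ᵐ x : ℝ, x ≠ 1 / 2 := by simp [ae_iff, measure_singleton]
      filter_upwards [this] with x hx hxm
      rw [uIoc_of_le (by norm_num)] at hxm
      have hx' : x ∈ Ioo (-(1 / 2) : ℝ) (1 / 2) := ⟨hxm.1, lt_of_le_of_ne hxm.2 hx⟩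
      refine Tendsto.add (Tendsto.pow ?_ 2) (((hφlim x hx').pow 2).const_mul _)
      refine tendsto_const_nhds.congr' ?_
      filter_upwards [hχlim x hx'] with n hn
      simp only [hφderiv, hn, mul_one]
  exact ge_of_tendsto' hlim hnonneg

variable {q : ℝ → ℝ} {r dmax M : ℝ}

/-- The energy of the alternating configuration does not exceed the Neumann energy of a single
extremal cell, hence neither does `E₀`. -/
theorem GroundEnergy1_le_E0fun1 (h0 : 0 ≤ dmax) (hdmax : dmax = 1 / 2 - r)
    (hq_meas : Measurable q) (hq_supp : ∀ x : ℝ, r < |x| → q x = 0)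
    (hq_symm : ∀ x : ℝ, q (-x) = q x) (hM : ∀ x, |q x| ≤ M) :
    GroundEnergy1 q dmax ≤ E0fun1 q dmax := by
  have hω : ∀ i, |altConf dmax i| ≤ dmax := abs_altConf h0
  refine (GroundEnergy1_le hdmax hq_supp hM hω).trans ?_
  set E := Energy1 q (altConf dmax) with hE
  unfold E0fun1
  rw [le_NeumannGS1_iff (W := fun x => q (x - dmax)) (by fun_prop) (fun x => hM _) (by norm_num)]
  have hVm := measurable_Vpot1 hdmax hq_meas hq_supp hω
  have hVb := abs_Vpot1_le hdmax hq_supp hM hω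
  set W : ℝ → ℝ := fun x => Vpot1 q (altConf dmax) x - E with hW
  have hWm : Measurable W := hVm.sub_const _
  have hWb : ∀ x, |W x| ≤ 2 * M + |E| := fun x => by
    refine (abs_sub _ _).trans ?_
    linarith [hVb x]
  have hflat : FormNonneg W (-(1 / 2)) (1 / 2) := by
    refine formNonneg_of_flat hWm hWb fun φ η hη hφ hr hl => ?_
    obtain ⟨Φ, hΦ, hΦφ, hper, hsym⟩ := exists_reflection_extension hφ hη hr hl
    rw [← qform_congr_Ioo (by norm_num) fun x hx => hΦφ x (Ioo_subset_Icc_self hx)]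
    refine cell_qform_nonneg hWm hWb (fun x => ?_) (fun x => ?_) ?_ hΦ hper hsym
    · simp only [hW, Vpot1_alt_add_two]
    · simp only [hW, Vpot1_alt_one_sub hq_symm]
    · intro A B ψ hAB hψ hz
      have hts : tsupport ψ ⊆ Icc A B := by
        refine closure_minimal (fun x hx => ?_) isClosed_Icc
        by_contra hx'
        exact hx (hz x fun h => hx' (Ioo_subset_Icc_self h))
      have hcs : HasCompactSupport ψ := isCompact_Icc.of_isClosed_subset isClosed_closure hts
      have := Energy1_mul_le hdmax hq_supp hM hω hψ hcs
      rw [qform_sub_const hVm hVb A B E hψ]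
      have e1 : ∫ x in A..B, ψ x ^ 2 = ∫ x, ψ x ^ 2 := by
        refine intervalIntegral.integral_eq_integral_of_support_subset fun x hx => ?_
        by_contra hx'
        exact hx (by simp [hz x fun h => hx' (Ioo_subset_Ioc_self h)])
      have e2 : qform (Vpot1 q (altConf dmax)) A B ψ
          = ∫ x, (deriv ψ x ^ 2 + Vpot1 q (altConf dmax) x * ψ x ^ 2) := by
        unfold qform
        rw [intervalIntegral.integral_of_le hAB, ← integral_Icc_eq_integral_Ioc]
        refine setIntegral_eq_integral_of_forall_compl_eq_zero fun x hx => ?_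
        have h1 : deriv ψ x = 0 := by
          by_contra h
          exact hx (hts (support_deriv_subset h))
        simp [h1, hz x fun h => hx (Ioo_subset_Icc_self h)]
      rw [e1, e2]
      linarith
  intro ψ hψ
  rw [← qform_congr_pot (W := W) (by norm_num) _ ψ]
  · exact hflat ψ hψ
  · intro x hx
    simp only [hW, Vpot1_alt_cell h0 hdmax hq_supp hx]

end

/-! ### Measurability and product probabilities -/

section
variable {q : ℝ → ℝ} {r dmax M : ℝ}

theorem continuous_integral_shift (hq_meas : Measurable q) (hM : ∀ x, |q x| ≤ M) {ψ : ℝ → ℝ}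
    (hψ : Continuous ψ) : Continuous fun a => ∫ y in (-1 : ℝ)..1, q y * ψ (y + a) ^ 2 := by
  have hM0 : 0 ≤ M := (abs_nonneg _).trans (hM 0)
  rw [continuous_iff_continuousAt]
  intro a₀
  obtain ⟨b, hb⟩ := isCompact_Icc.exists_bound_of_continuousOn (s := Icc (a₀ - 2) (a₀ + 2))
    hψ.continuousOn
  refine intervalIntegral.continuousAt_of_dominated_interval (bound := fun _ => M * b ^ 2)
    (.of_forall fun a => ?_) ?_ intervalIntegrable_const (.of_forall fun y _ => ?_)
  · exact (hq_meas.mul ((hψ.measurable.comp (by fun_prop)).pow_const 2)).aestronglyMeasurable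
  · filter_upwards [Ioo_mem_nhds (show a₀ - 1 < a₀ by linarith) (show a₀ < a₀ + 1 by linarith)]
      with a ha
    refine .of_forall fun y hy => ?_
    rw [uIoc_of_le (by norm_num)] at hy
    have h1 := hb (y + a) ⟨by linarith [ha.1, hy.1], by linarith [ha.2, hy.2]⟩
    rw [norm_mul, norm_pow]
    have h2 : ‖q y‖ ≤ M := hM y
    gcongr
  · exact (by fun_prop : Continuous fun a => q y * ψ (y + a) ^ 2).continuousAt

/-- The displacement is moved from the bounded function `q` to the continuous function `ψ`, where it
is harmless for continuity in `a`. -/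
theorem integral_cell_eq_shift (hdmax : dmax = 1 / 2 - r)
    (hq_supp : ∀ x : ℝ, r < |x| → q x = 0) (ψ : ℝ → ℝ) {a : ℝ} (ha : a ∈ Icc (-dmax) dmax) :
    ∫ x in (-(1 / 2) : ℝ)..(1 / 2), q (x - a) * ψ x ^ 2
      = ∫ y in (-1 : ℝ)..1, q y * ψ (y + a) ^ 2 := by
  rw [intervalIntegral.integral_of_le (by norm_num), intervalIntegral.integral_of_le (by norm_num),
    ← integral_Icc_eq_integral_Ioc, ← integral_Icc_eq_integral_Ioc,
    setIntegral_eq_integral_of_forall_compl_eq_zero,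
    setIntegral_eq_integral_of_forall_compl_eq_zero,
    ← integral_add_right_eq_self (fun x => q (x - a) * ψ x ^ 2) a]
  · simp
  · intro x hx
    rw [hq_supp x, zero_mul]
    by_contra h
    push Not at h
    rw [abs_le] at h
    exact hx ⟨by linarith [ha.1, ha.2], by linarith [ha.1, ha.2]⟩
  · intro x hx
    rw [hq_supp (x - a), zero_mul]
    by_contra h
    push Not at h
    rw [abs_le] at h
    exact hx ⟨by linarith [ha.1, ha.2], by linarith [ha.1, ha.2]⟩

/-- Superlevel sets of `E₀(·)` are closed, as `E₀(·)` is an infimum of functions that are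
continuous on `[-dmax, dmax]`. -/
theorem isClosed_superlevel (hdmax : dmax = 1 / 2 - r)
    (hq_meas : Measurable q) (hq_supp : ∀ x : ℝ, r < |x| → q x = 0) (hM : ∀ x, |q x| ≤ M)
    (c : ℝ) : IsClosed {a | a ∈ Icc (-dmax) dmax ∧ c ≤ E0fun1 q a} := by
  have key : {a | a ∈ Icc (-dmax) dmax ∧ c ≤ E0fun1 q a} = Icc (-dmax) dmax ∩
      ⋂ (ψ : ℝ → ℝ) (_ : ContDiff ℝ (⊤ : ℕ∞) ψ),
        {a | 0 ≤ (∫ x in (-(1 / 2) : ℝ)..(1 / 2), deriv ψ x ^ 2)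
          + (∫ y in (-1 : ℝ)..1, q y * ψ (y + a) ^ 2)
          - c * ∫ x in (-(1 / 2) : ℝ)..(1 / 2), ψ x ^ 2} := by
    ext a
    simp only [mem_ofPred_eq, mem_inter_iff, mem_iInter]
    refine and_congr_right fun ha => ?_
    unfold E0fun1
    have hqm : Measurable fun x => q (x - a) := by fun_prop
    rw [le_NeumannGS1_iff (W := fun x => q (x - a)) hqm (fun x => hM _) (by norm_num)]
    refine forall_congr' fun ψ => forall_congr' fun hψ => ?_
    rw [qform_sub_const (W := fun x => q (x - a)) hqm (fun x => hM _) _ _ _ hψ,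
      qform_eq (W := fun x => q (x - a)) hqm (fun x => hM _) _ _ hψ,
      integral_cell_eq_shift hdmax hq_supp ψ ha]
  rw [key]
  refine isClosed_Icc.inter (isClosed_iInter fun ψ => isClosed_iInter fun hψ => ?_)
  exact isClosed_le continuous_const
    ((continuous_const.add (continuous_integral_shift hq_meas hM hψ.continuous)).sub
      continuous_const)

theorem pi_compl_le (μ : Measure ℝ) [IsProbabilityMeasure μ] {S : Set ℝ} (hS : MeasurableSet S)
    (L : ℕ) : (Measure.pi fun _ : Fin L => μ) (univ.pi fun _ => Sᶜ)
      ≤ ENNReal.ofReal (Real.exp (-(μ S).toReal * L)) := by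
  have h1 : μ Sᶜ ≤ ENNReal.ofReal (Real.exp (-(μ S).toReal)) := by
    rw [prob_compl_eq_one_sub hS, ← ENNReal.ofReal_toReal (measure_ne_top μ S),
      ← ENNReal.ofReal_one, ← ENNReal.ofReal_sub _ ENNReal.toReal_nonneg,
      ENNReal.toReal_ofReal ENNReal.toReal_nonneg]
    refine ENNReal.ofReal_le_ofReal ?_
    linarith [Real.add_one_le_exp (-(μ S).toReal)]
  rw [Measure.pi_pi, Finset.prod_const, Finset.card_univ, Fintype.card_fin]
  refine (pow_le_pow_left' h1 L).trans ?_
  rw [← ENNReal.ofReal_pow (Real.exp_nonneg _), ← Real.exp_nat_mul, mul_comm]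

end

end

/-- (Finite-volume core of Hölder continuity of the IDS at
`E₀` for a non-Bernoulli displacement distribution.) If `μ` gives positive
mass to the open interval `(-dmax, dmax)`, then there are `C₁, s₀, γ₀ > 0`
such that for every `L ≥ 1` the `μ^{⊗L}`-probability that
`λ_L^N ≤ E₀ + s₀ e^{-2C₁(L+1)}` is at most `e^{-γ₀ L}`. -/
theorem statement16 (r dmax : ℝ) (hr0 : 0 < r) (hr : r < 1 / 2)
    (hdmax : dmax = 1 / 2 - r) (q : ℝ → ℝ)
    (hq_meas : Measurable q) (hq_bdd : ∃ M, ∀ x, |q x| ≤ M)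
    (hq_supp : ∀ x : ℝ, r < |x| → q x = 0)
    (hq_symm : ∀ x : ℝ, q (-x) = q x)
    (halt : AltI1 q dmax)
    (μ : Measure ℝ) [IsProbabilityMeasure μ]
    (hμsupp : μ (Set.Icc (-dmax) dmax) = 1)
    (hμint : 0 < μ (Set.Ioo (-dmax) dmax)) :
    ∃ C₁ > (0 : ℝ), ∃ s₀ > (0 : ℝ), ∃ γ₀ > (0 : ℝ), ∀ L : ℕ, 1 ≤ L →
      (Measure.pi fun _ : Fin L => μ)
        {ω : Fin L → ℝ |
          lamN q L ω ≤ GroundEnergy1 q dmax + s₀ * Real.exp (-2 * C₁ * ((L : ℝ) + 1))}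
        ≤ ENNReal.ofReal (Real.exp (-γ₀ * (L : ℝ))) := by
  obtain ⟨M, hM⟩ := hq_bdd
  have hd0 : 0 ≤ dmax := by linarith
  have hE₀ := GroundEnergy1_le_E0fun1 hd0 hdmax hq_meas hq_supp hq_symm hM
  set e := E0fun1 q dmax with he
  have hmin : ∀ a, |a| ≤ dmax → e ≤ E0fun1 q a := by
    intro a ha
    rcases ha.lt_or_eq with h | h
    · exact (halt.2.2 a h).le
    · rcases eq_or_eq_neg_of_abs_eq h with h | h
      · rw [h]
      · rw [h, ← halt.2.1]
  -- displacements whose cell energy exceeds the minimum by a definite amount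
  set S : ℕ → Set ℝ := fun n => {a | a ∈ Icc (-dmax) dmax ∧ e + 1 / ((n : ℝ) + 1) ≤ E0fun1 q a}
    with hS
  have hSm : ∀ n, MeasurableSet (S n) := fun n =>
    (isClosed_superlevel hdmax hq_meas hq_supp hM _).measurableSet
  obtain ⟨n, hn⟩ : ∃ n, 0 < μ (S n) := by
    refine exists_measure_pos_of_not_measure_iUnion_null
      (hμint.trans_le (measure_mono fun a ha => ?_)).ne'
    have hgap := halt.2.2 a (abs_lt.2 ha)
    obtain ⟨n, hn⟩ := exists_nat_one_div_lt (sub_pos.2 hgap)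
    exact mem_iUnion.2 ⟨n, Ioo_subset_Icc_self ha, by linarith⟩
  obtain ⟨C₁, hC₁, s₀, hs₀, hlow⟩ := exists_lamN_lower hdmax hq_meas hq_supp hM
    (show (0 : ℝ) < 1 / ((n : ℝ) + 1) by positivity) hmin
  refine ⟨C₁, hC₁, s₀, hs₀, (μ (S n)).toReal,
    ENNReal.toReal_pos hn.ne' (measure_ne_top _ _), fun L _ => ?_⟩
  refine le_trans ?_ (pi_compl_le μ (hSm n) L)
  have hsub : {ω : Fin L → ℝ |
      lamN q L ω ≤ GroundEnergy1 q dmax + s₀ * Real.exp (-2 * C₁ * ((L : ℝ) + 1))}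
      ⊆ (univ.pi fun _ => Icc (-dmax) dmax)ᶜ ∪ univ.pi fun _ => (S n)ᶜ := by
    intro ω hω
    by_contra hcon
    simp only [mem_union, not_or, mem_compl_iff, not_not, Set.mem_pi, mem_univ, true_implies] at hcon
    obtain ⟨hin, hex⟩ := hcon
    obtain ⟨i, hi⟩ := not_forall.1 hex
    rw [not_not] at hi
    have h1 := hlow L ω (fun i => abs_le.2 (hin i)) ⟨i, hi.2⟩
    have h2 : Real.exp (-2 * C₁ * ((L : ℝ) + 1)) < Real.exp (-2 * C₁ * L) :=
      Real.exp_lt_exp.2 (by linarith)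
    have h3 := mul_lt_mul_of_pos_left h2 hs₀
    have h4 : lamN q L ω ≤ GroundEnergy1 q dmax + s₀ * Real.exp (-2 * C₁ * ((L : ℝ) + 1)) := hω
    linarith
  refine (measure_mono hsub).trans ((measure_union_le _ _).trans ?_)
  have hnull : (Measure.pi fun _ : Fin L => μ) (univ.pi fun _ => Icc (-dmax) dmax)ᶜ = 0 := by
    rw [prob_compl_eq_zero_iff (MeasurableSet.univ_pi fun _ => measurableSet_Icc),
      Measure.pi_pi]
    simp [hμsupp]
  rw [hnull, zero_add]
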